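/- Let H be the star-expansion of the four-vertex path P₄. Then there exists a real number τ > 0 such that every graph G that is both H-free and H̄-free satisfies max(α(G), ω(G)) ≥ |G|^τ; that is, {H, H̄} has the Erdős–Hajnal property. -/

import Mathlib

open SimpleGraph

/-- The independence (stable set) number of a graph: the clique number of the complement. -/
noncomputable def alphaNum {V : Type*} (G : SimpleGraph V) : ℕ := Gᶜ.cliqueNum

/-- The clique number of a graph. -/
noncomputable def omegaNum {V : Type*} (G : SimpleGraph V) : ℕ := G.cliqueNum

/-- κ(G) = α(G)·ω(G). -/
noncomputable def kappaNum {V : Type*} (G : SimpleGraph V) : ℕ := alphaNum G * omegaNum G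

/-- The star-expansion of `H`: for each vertex `b` of `H`, add a new vertex `a_b` adjacent
to `b` only, and add one further vertex `v` adjacent to all of the `a_b` and nothing else. -/
def starExpansion {W : Type*} (H : SimpleGraph W) : SimpleGraph (W ⊕ W ⊕ Unit) :=
  SimpleGraph.fromRel (fun x y =>
    match x, y with
    | Sum.inl b, Sum.inl b' => H.Adj b b'
    | Sum.inl b, Sum.inr (Sum.inl a) => b = a
    | Sum.inr (Sum.inl _), Sum.inr (Sum.inr _) => True
    | _, _ => False)

open scoped Classical in
/-- The largest size of a clique of `G` inside the finite set `A`. -/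
noncomputable def cliqueNumIn {V : Type*} (G : SimpleGraph V) (A : Finset V) : ℕ :=
  (A.powerset.filter (fun S : Finset V => G.IsClique (S : Set V))).sup Finset.card

/-- The product of the largest sizes of a clique and of a stable set inside `A`. -/
noncomputable def kappaIn {V : Type*} (G : SimpleGraph V) (A : Finset V) : ℕ :=
  cliqueNumIn G A * cliqueNumIn Gᶜ A

section CliqueNumbers

open scoped Classical

variable {V : Type*} {G : SimpleGraph V} {A B C : Finset V}

lemma card_le_cliqueNumIn (hA : A ⊆ B) (h : G.IsClique (A : Set V)) : A.card ≤ cliqueNumIn G B :=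
  Finset.le_sup (f := Finset.card) (Finset.mem_filter.2 ⟨Finset.mem_powerset.2 hA, h⟩)

lemma exists_clique_card_eq (G : SimpleGraph V) (A : Finset V) :
    ∃ S ⊆ A, G.IsClique (S : Set V) ∧ S.card = cliqueNumIn G A := by
  have hne : (A.powerset.filter (fun S : Finset V => G.IsClique (S : Set V))).Nonempty :=
    ⟨∅, by simp⟩
  obtain ⟨S, hS, h⟩ := Finset.exists_mem_eq_sup _ hne Finset.card
  rw [Finset.mem_filter, Finset.mem_powerset] at hS
  exact ⟨S, hS.1, hS.2, h.symm⟩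

lemma cliqueNumIn_mono (h : A ⊆ B) : cliqueNumIn G A ≤ cliqueNumIn G B := by
  obtain ⟨S, hS, hc, he⟩ := exists_clique_card_eq G A
  exact he ▸ card_le_cliqueNumIn (hS.trans h) hc

lemma kappaIn_mono (h : A ⊆ B) : kappaIn G A ≤ kappaIn G B :=
  Nat.mul_le_mul (cliqueNumIn_mono h) (cliqueNumIn_mono h)

lemma kappaIn_compl (G : SimpleGraph V) (A : Finset V) : kappaIn Gᶜ A = kappaIn G A := by
  simp [kappaIn, mul_comm]

lemma cliqueNumIn_pos (h : A.Nonempty) : 0 < cliqueNumIn G A := by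
  obtain ⟨a, ha⟩ := h
  have := card_le_cliqueNumIn (G := G) (A := {a}) (B := A) (by simpa using ha) (by simp)
  simpa [Nat.one_le_iff_ne_zero, Nat.pos_iff_ne_zero] using this

lemma kappaIn_pos (h : A.Nonempty) : 0 < kappaIn G A :=
  Nat.mul_pos (cliqueNumIn_pos h) (cliqueNumIn_pos h)

lemma cliqueNumIn_add_le (hA : A ⊆ C) (hB : B ⊆ C) (h : ∀ a ∈ A, ∀ b ∈ B, G.Adj a b) :
    cliqueNumIn G A + cliqueNumIn G B ≤ cliqueNumIn G C := by
  obtain ⟨S, hS, hSc, hSe⟩ := exists_clique_card_eq G A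
  obtain ⟨T, hT, hTc, hTe⟩ := exists_clique_card_eq G B
  have hd : Disjoint S T := by
    rw [Finset.disjoint_left]
    intro x hx hx'
    exact G.loopless.irrefl x (h x (hS hx) x (hT hx'))
  rw [← hSe, ← hTe, ← Finset.card_union_of_disjoint hd]
  apply card_le_cliqueNumIn (Finset.union_subset (hS.trans hA) (hT.trans hB))
  intro x hx y hy hxy
  simp only [Finset.coe_union, Set.mem_union, Finset.mem_coe] at hx hy
  rcases hx with hx | hx <;> rcases hy with hy | hy
  · exact hSc hx hy hxy
  · exact h x (hS hx) y (hT hy)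
  · exact (h y (hS hy) x (hT hx)).symm
  · exact hTc hx hy hxy

lemma kappaIn_add_le_of_complete (hA : A ⊆ C) (hB : B ⊆ C) (h : ∀ a ∈ A, ∀ b ∈ B, G.Adj a b) :
    kappaIn G A + kappaIn G B ≤ kappaIn G C := by
  unfold kappaIn
  calc _ ≤ cliqueNumIn G A * cliqueNumIn Gᶜ C + cliqueNumIn G B * cliqueNumIn Gᶜ C := by
        gcongr
        · exact cliqueNumIn_mono hA
        · exact cliqueNumIn_mono hB
    _ = (cliqueNumIn G A + cliqueNumIn G B) * cliqueNumIn Gᶜ C := by ring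
    _ ≤ _ := Nat.mul_le_mul_right _ (cliqueNumIn_add_le hA hB h)

lemma kappaIn_add_le_of_anticomplete (hA : A ⊆ C) (hB : B ⊆ C) (hd : Disjoint A B)
    (h : ∀ a ∈ A, ∀ b ∈ B, ¬ G.Adj a b) :
    kappaIn G A + kappaIn G B ≤ kappaIn G C := by
  simp only [← kappaIn_compl G]
  refine kappaIn_add_le_of_complete hA hB fun a ha b hb => ?_
  rw [compl_adj]
  exact ⟨fun e => Finset.disjoint_left.1 hd ha (e ▸ hb), h a ha b hb⟩

lemma two_le_kappaIn (h : 2 ≤ A.card) : 2 ≤ kappaIn G A := by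
  obtain ⟨a, ha, b, hb, hab⟩ := Finset.one_lt_card.1 h
  have h1 : 0 < kappaIn G {a} := kappaIn_pos (by simp)
  have h2 : 0 < kappaIn G {b} := kappaIn_pos (by simp)
  have hA : ({a} : Finset V) ⊆ A := by simpa using ha
  have hB : ({b} : Finset V) ⊆ A := by simpa using hb
  by_cases hadj : G.Adj a b
  · have := kappaIn_add_le_of_complete (G := G) hA hB (by simpa using hadj)
    omega
  · have := kappaIn_add_le_of_anticomplete (G := G) hA hB (by simpa using hab)
      (by simpa using hadj)
    omega

end CliqueNumbers

section Rainbow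

open scoped Classical

variable {V ι : Type*}

/-- No induced four-vertex path of `G` inside `Z` has four distinct colours. -/
def RainbowPathFree (G : SimpleGraph V) (c : V → ι) (Z : Finset V) : Prop :=
  ∀ x ∈ Z, ∀ y ∈ Z, ∀ z ∈ Z, ∀ w ∈ Z, c x ≠ c y → c x ≠ c z → c x ≠ c w → c y ≠ c z →
    c y ≠ c w → c z ≠ c w → G.Adj x y → G.Adj y z → G.Adj z w →
    ¬ G.Adj x z → ¬ G.Adj x w → ¬ G.Adj y w → False

lemma RainbowPathFree.mono {G : SimpleGraph V} {c : V → ι} {Z Z' : Finset V}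
    (h : RainbowPathFree G c Z) (hZ : Z' ⊆ Z) : RainbowPathFree G c Z' :=
  fun x hx y hy z hz w hw => h x (hZ hx) y (hZ hy) z (hZ hz) w (hZ hw)

lemma RainbowPathFree.compl {G : SimpleGraph V} {c : V → ι} {Z : Finset V}
    (h : RainbowPathFree G c Z) : RainbowPathFree Gᶜ c Z := by
  intro x hx y hy z hz w hw hxy hxz hxw hyz hyw hzw axy ayz azw nxz nxw nyw
  have key : ∀ {a b : V}, c a ≠ c b → ¬ Gᶜ.Adj a b → G.Adj a b := by
    intro a b hab hn
    rw [compl_adj] at hn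
    by_contra hcon
    exact hn ⟨fun e => hab (e ▸ rfl), hcon⟩
  rw [compl_adj] at axy ayz azw
  exact h z hz x hx w hw y hy hxz.symm hzw hyz.symm hxw hxy hyw.symm
    (key hxz nxz).symm (key hxw nxw) (key hyw nyw).symm azw.2 (fun e => ayz.2 e.symm) axy.2

/-- `Z` contains two disjoint subsets, each at least a `1 / L` fraction of `Z`, such that all pairs
of differently coloured vertices between them are adjacent, or all are nonadjacent. -/
def HasColourPurePair (G : SimpleGraph V) (c : V → ι) (Z : Finset V) (L : ℕ) : Prop :=
  ∃ U ⊆ Z, ∃ W ⊆ Z, Disjoint U W ∧ Z.card ≤ L * U.card ∧ Z.card ≤ L * W.card ∧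
    ((∀ u ∈ U, ∀ w ∈ W, c u ≠ c w → G.Adj u w) ∨ (∀ u ∈ U, ∀ w ∈ W, c u ≠ c w → ¬ G.Adj u w))

lemma HasColourPurePair.of_compl {G : SimpleGraph V} {c : V → ι} {Z : Finset V} {L : ℕ}
    (h : HasColourPurePair Gᶜ c Z L) : HasColourPurePair G c Z L := by
  obtain ⟨U, hU, W, hW, hd, h1, h2, h3⟩ := h
  refine ⟨U, hU, W, hW, hd, h1, h2, ?_⟩
  rcases h3 with h3 | h3
  · exact Or.inr fun u hu w hw hc => ((compl_adj _ _ _).1 (h3 u hu w hw hc)).2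
  · refine Or.inl fun u hu w hw hc => ?_
    have := h3 u hu w hw hc
    rw [compl_adj] at this
    by_contra hcon
    exact this ⟨fun e => hc (e ▸ rfl), hcon⟩

/-- Either a finite set splits into two large parts without related pairs between them, or it
has a large subset that no predicate cuts without cutting a related pair. -/
lemma exists_split_or_indecomposable (r : V → V → Prop) (hr : ∀ a b, r a b → r b a)
    (M : Finset V) :
    (∃ U ⊆ M, ∃ W ⊆ M, Disjoint U W ∧ M.card ≤ 3 * U.card ∧ M.card ≤ 3 * W.card ∧
      ∀ u ∈ U, ∀ w ∈ W, ¬ r u w) ∨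
    (∃ C ⊆ M, M.card ≤ 3 * C.card ∧ ∀ p : V → Prop, (∃ x ∈ C, p x) → (∃ x ∈ C, ¬ p x) →
      ∃ x ∈ C, ∃ y ∈ C, p x ∧ ¬ p y ∧ r x y) := by
  let F := M.powerset.filter (fun U => M.card ≤ 3 * U.card ∧ ∀ u ∈ U, ∀ w ∈ M \ U, ¬ r u w)
  have hF : F.Nonempty := ⟨M, Finset.mem_filter.2 ⟨by simp, by omega, by simp⟩⟩
  obtain ⟨U, hU, hmin⟩ := Finset.exists_min_image F Finset.card hF
  simp only [F, Finset.mem_filter, Finset.mem_powerset] at hU hmin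
  obtain ⟨hUM, hcard, hcl⟩ := hU
  have hsd := Finset.card_sdiff_add_card_eq_card hUM
  by_cases hbig : M.card ≤ 3 * (M \ U).card
  · exact Or.inl ⟨U, hUM, M \ U, Finset.sdiff_subset, Finset.disjoint_sdiff, hcard, hbig, hcl⟩
  · refine Or.inr ⟨U, hUM, hcard, fun p hp hnp => ?_⟩
    by_contra hcon
    push Not at hcon
    obtain ⟨x, hx, hpx⟩ := hp
    obtain ⟨y, hy, hpy⟩ := hnp
    have hsum := Finset.card_filter_add_card_filter_not (s := U) p
    have h1 : (U.filter p).card < U.card := Finset.card_lt_card (by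
      rw [Finset.filter_ssubset]; exact ⟨y, hy, hpy⟩)
    have h2 : (U.filter (fun a => ¬ p a)).card < U.card := Finset.card_lt_card (by
      rw [Finset.filter_ssubset]; exact ⟨x, hx, by simpa using hpx⟩)
    have h3 : ¬ M.card ≤ 3 * (U.filter p).card := fun h => by
      have := hmin (U.filter p) ⟨(Finset.filter_subset _ _).trans hUM, h, by
        intro u hu w hw hruw
        simp only [Finset.mem_filter, Finset.mem_sdiff] at hu hw
        by_cases hwU : w ∈ U
        · exact hcon u hu.1 w hwU hu.2 (fun hpw => hw.2 ⟨hwU, hpw⟩) hruw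
        · exact hcl u hu.1 w (by simp [hw.1, hwU]) hruw⟩
      omega
    have h4 : ¬ M.card ≤ 3 * (U.filter (fun a => ¬ p a)).card := fun h => by
      have := hmin (U.filter (fun a => ¬ p a)) ⟨(Finset.filter_subset _ _).trans hUM, h, by
        intro u hu w hw hruw
        simp only [Finset.mem_filter, Finset.mem_sdiff] at hu hw
        by_cases hwU : w ∈ U
        · have hpw : p w := by
            by_contra hpw
            exact hw.2 ⟨hwU, hpw⟩
          exact hcon w hwU u hu.1 hpw hu.2 (hr _ _ hruw)
        · exact hcl u hu.1 w (by simp [hw.1, hwU]) hruw⟩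
      omega
    omega

/-- A set `N` dominated by `T` and a set `M` with no neighbour in `T`, with separated colours,
yield a pure pair. -/
lemma hasColourPurePair_of_dominated {G : SimpleGraph V} {c : V → ι} {Z T N M : Finset V} {L : ℕ}
    (hZ : RainbowPathFree G c Z) (hT : T ⊆ Z) (hN : N ⊆ Z) (hM : M ⊆ Z)
    (hTN : ∀ t ∈ T, ∀ y ∈ N, c t ≠ c y) (hTM : ∀ t ∈ T, ∀ y ∈ M, c t ≠ c y)
    (hNM : ∀ t ∈ N, ∀ y ∈ M, c t ≠ c y)
    (hdom : ∀ y ∈ N, ∃ t ∈ T, G.Adj t y) (hanti : ∀ y ∈ M, ∀ t ∈ T, ¬ G.Adj t y)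
    (hNc : Z.card ≤ L * N.card) (hMc : Z.card ≤ L * M.card) :
    HasColourPurePair G c Z (3 * L) := by
  rcases exists_split_or_indecomposable (fun a b => G.Adj a b ∧ c a ≠ c b)
    (fun a b h => ⟨h.1.symm, h.2.symm⟩) M with
    ⟨U, hU, W, hW, hd, h1, h2, h3⟩ | ⟨C, hC, h1, h2⟩
  · exact ⟨U, hU.trans hM, W, hW.trans hM, hd, by nlinarith, by nlinarith,
      Or.inr fun u hu w hw hc ha => h3 u hu w hw ⟨ha, hc⟩⟩
  · have hpure : ∀ y ∈ N, (∀ x ∈ C, G.Adj y x) ∨ (∀ x ∈ C, ¬ G.Adj y x) := by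
      intro y hy
      by_contra hcon
      push Not at hcon
      obtain ⟨⟨x, hx, hxn⟩, ⟨x', hx', hxa⟩⟩ := hcon
      obtain ⟨z, hz, w, hw, hyz, hyw, hzw, hcol⟩ := h2 (fun a => G.Adj y a) ⟨x', hx', hxa⟩ ⟨x, hx, hxn⟩
      obtain ⟨t, ht, hty⟩ := hdom y hy
      exact hZ t (hT ht) y (hN hy) z (hM (hC hz)) w (hM (hC hw)) (hTN t ht y hy)
        (hTM t ht z (hC hz)) (hTM t ht w (hC hw)) (hNM y hy z (hC hz)) (hNM y hy w (hC hw)) hcol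
        hty hyz hzw (hanti z (hC hz) t ht) (hanti w (hC hw) t ht) hyw
    have hdisj : ∀ N' ⊆ N, Disjoint N' C := by
      intro N' hN'
      rw [Finset.disjoint_left]
      intro a ha ha'
      exact hNM a (hN' ha) a (hC ha') rfl
    have hsum := Finset.card_filter_add_card_filter_not (s := N) (fun y => ∀ x ∈ C, G.Adj y x)
    have hsub1 := Finset.filter_subset (fun y => ∀ x ∈ C, G.Adj y x) N
    have hsub2 := Finset.filter_subset (fun y => ¬ ∀ x ∈ C, G.Adj y x) N
    have hmem1 := fun y => Finset.mem_filter (s := N) (p := fun y => ∀ x ∈ C, G.Adj y x) (a := y)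
    have hmem2 := fun y => Finset.mem_filter (s := N) (p := fun y => ¬ ∀ x ∈ C, G.Adj y x) (a := y)
    generalize N.filter (fun y => ∀ x ∈ C, G.Adj y x) = N₁ at hsum hsub1 hmem1
    generalize N.filter (fun y => ¬ ∀ x ∈ C, G.Adj y x) = N₂ at hsum hsub2 hmem2
    have hCc : Z.card ≤ 3 * L * C.card := by nlinarith
    by_cases hhalf : N.card ≤ 2 * N₁.card
    · exact ⟨N₁, hsub1.trans hN, C, hC.trans hM, hdisj _ hsub1, by nlinarith, hCc,
        Or.inl fun u hu w hw _ => ((hmem1 u).1 hu).2 w hw⟩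
    · have hhalf' : N.card ≤ 2 * N₂.card := by omega
      refine ⟨N₂, hsub2.trans hN, C, hC.trans hM, hdisj _ hsub2, by nlinarith, hCc,
        Or.inr fun u hu w hw _ => ?_⟩
      have hu' := (hmem2 u).1 hu
      exact ((hpure u hu'.1).resolve_left hu'.2) w hw

/-- Three colour-separated sets, where every vertex of the first has few neighbours in the other
two, yield a pure pair. -/
lemma hasColourPurePair_of_sparse {G : SimpleGraph V} {c : V → ι} {Z P Q R : Finset V} {L : ℕ}
    (hZ : RainbowPathFree G c Z) (hP : P ⊆ Z) (hQ : Q ⊆ Z) (hR : R ⊆ Z)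
    (hPQ : ∀ t ∈ P, ∀ y ∈ Q, c t ≠ c y) (hPR : ∀ t ∈ P, ∀ y ∈ R, c t ≠ c y)
    (hQR : ∀ t ∈ Q, ∀ y ∈ R, c t ≠ c y) (hZ0 : 0 < Z.card)
    (hPc : Z.card ≤ L * P.card) (hQc : Z.card ≤ L * Q.card) (hRc : Z.card ≤ L * R.card)
    (hlowQ : ∀ x ∈ P, 4 * (Q.filter (G.Adj x)).card < Q.card)
    (hlowR : ∀ x ∈ P, 4 * (R.filter (G.Adj x)).card < R.card) :
    HasColourPurePair G c Z (12 * L) := by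
  let nb : Finset V → Finset V → Finset V := fun T S => S.filter (fun y => ∃ t ∈ T, G.Adj t y)
  let F := P.powerset.filter (fun T => 4 * (nb T Q).card < Q.card ∧ 4 * (nb T R).card < R.card)
  have hQ0 : 0 < Q.card := by
    rcases Nat.eq_zero_or_pos Q.card with h | h
    · rw [h] at hQc; omega
    · exact h
  have hR0 : 0 < R.card := by
    rcases Nat.eq_zero_or_pos R.card with h | h
    · rw [h] at hRc; omega
    · exact h
  have hF : F.Nonempty := ⟨∅, by simp [F, nb, Finset.card_pos.1 hQ0, Finset.card_pos.1 hR0]⟩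
  obtain ⟨T, hT, hmax⟩ := Finset.exists_max_image F Finset.card hF
  simp only [F, Finset.mem_filter, Finset.mem_powerset] at hT hmax
  obtain ⟨hTP, hTQ, hTR⟩ := hT
  by_cases hTeq : T = P
  · have hsd := Finset.card_sdiff_add_card_eq_card (Finset.filter_subset _ _ : nb T Q ⊆ Q)
    refine ⟨P, hP, Q \ nb T Q, Finset.sdiff_subset.trans hQ, ?_, by nlinarith, by nlinarith, Or.inr ?_⟩
    · rw [Finset.disjoint_left]
      intro a ha ha'
      exact hPQ a ha a (Finset.mem_sdiff.1 ha').1 rfl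
    · intro u hu w hw _ ha
      rw [Finset.mem_sdiff, Finset.mem_filter] at hw
      exact hw.2 ⟨hw.1, u, hTeq ▸ hu, ha⟩
  · obtain ⟨x, hxP, hxT⟩ := Finset.exists_of_ssubset (Finset.ssubset_iff_subset_ne.2 ⟨hTP, hTeq⟩)
    have hT'P : insert x T ⊆ P := Finset.insert_subset hxP hTP
    have hins : ∀ S, (nb (insert x T) S).card ≤ (S.filter (G.Adj x)).card + (nb T S).card := by
      intro S
      refine le_trans (Finset.card_le_card ?_) (Finset.card_union_le _ _)
      intro y hy
      simp only [nb, Finset.mem_filter, Finset.mem_union, Finset.mem_insert] at hy ⊢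
      obtain ⟨hyS, t, rfl | ht, hadj⟩ := hy
      · exact Or.inl ⟨hyS, hadj⟩
      · exact Or.inr ⟨hyS, t, ht, hadj⟩
    have hfail : ¬ (4 * (nb (insert x T) Q).card < Q.card ∧ 4 * (nb (insert x T) R).card < R.card) := by
      intro h
      have := hmax (insert x T) ⟨hT'P, h⟩
      rw [Finset.card_insert_of_notMem hxT] at this
      omega
    have core : ∀ Q R : Finset V, Q ⊆ Z → R ⊆ Z → (∀ t ∈ P, ∀ y ∈ Q, c t ≠ c y) →
        (∀ t ∈ P, ∀ y ∈ R, c t ≠ c y) → (∀ t ∈ Q, ∀ y ∈ R, c t ≠ c y) →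
        Z.card ≤ L * Q.card → Z.card ≤ L * R.card → Q.card ≤ 4 * (nb (insert x T) Q).card →
        2 * (nb (insert x T) R).card ≤ R.card → HasColourPurePair G c Z (12 * L) := by
      intro Q R hQ hR hPQ hPR hQR hQc hRc hq hr
      have hsd := Finset.card_sdiff_add_card_eq_card (Finset.filter_subset _ _ : nb (insert x T) R ⊆ R)
      have := hasColourPurePair_of_dominated (T := insert x T) (N := nb (insert x T) Q)
        (M := R \ nb (insert x T) R) (L := 4 * L) hZ (hT'P.trans hP)
        ((Finset.filter_subset _ _).trans hQ) (Finset.sdiff_subset.trans hR)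
        (fun t ht y hy => hPQ t (hT'P ht) y (Finset.mem_filter.1 hy).1)
        (fun t ht y hy => hPR t (hT'P ht) y (Finset.mem_sdiff.1 hy).1)
        (fun t ht y hy => hQR t (Finset.mem_filter.1 ht).1 y (Finset.mem_sdiff.1 hy).1)
        (fun y hy => (Finset.mem_filter.1 hy).2)
        (fun y hy t ht ha => (Finset.mem_sdiff.1 hy).2
          (Finset.mem_filter.2 ⟨(Finset.mem_sdiff.1 hy).1, t, ht, ha⟩))
        (by nlinarith) (by nlinarith)
      rwa [← mul_assoc] at this
    have h1 := hins Q
    have h2 := hins R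
    have h3 := hlowQ x hxP
    have h4 := hlowR x hxP
    by_cases h : Q.card ≤ 4 * (nb (insert x T) Q).card
    · exact core Q R hQ hR hPQ hPR hQR hQc hRc h (by omega)
    · exact core R Q hR hQ hPR hPQ (fun t ht y hy e => hQR y hy t ht e.symm) hRc hQc
        (by omega) (by omega)

/-- Three large colour-separated sets in a set without rainbow induced four-vertex paths yield a
pure pair. -/
lemma hasColourPurePair_of_separated {G : SimpleGraph V} {c : V → ι} {Z P Q R : Finset V} {L : ℕ}
    (hZ : RainbowPathFree G c Z) (hP : P ⊆ Z) (hQ : Q ⊆ Z) (hR : R ⊆ Z)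
    (hPQ : ∀ t ∈ P, ∀ y ∈ Q, c t ≠ c y) (hPR : ∀ t ∈ P, ∀ y ∈ R, c t ≠ c y)
    (hQR : ∀ t ∈ Q, ∀ y ∈ R, c t ≠ c y) (hZ0 : 0 < Z.card)
    (hPc : Z.card ≤ L * P.card) (hQc : Z.card ≤ L * Q.card) (hRc : Z.card ≤ L * R.card) :
    HasColourPurePair G c Z (24 * L) := by
  have hmono : HasColourPurePair G c Z (12 * L) → HasColourPurePair G c Z (24 * L) := by
    rintro ⟨U, hU, W, hW, hd, h1, h2, h3⟩
    exact ⟨U, hU, W, hW, hd, by nlinarith, by nlinarith, h3⟩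
  have hsplit : ∀ x, ∀ S : Finset V, (S.filter (G.Adj x)).card +
      (S.filter (fun y => ¬ G.Adj x y)).card = S.card := fun x S =>
    Finset.card_filter_add_card_filter_not _
  have core : ∀ Q R : Finset V, Q ⊆ Z → R ⊆ Z → (∀ t ∈ P, ∀ y ∈ Q, c t ≠ c y) →
      (∀ t ∈ P, ∀ y ∈ R, c t ≠ c y) → (∀ t ∈ Q, ∀ y ∈ R, c t ≠ c y) →
      Z.card ≤ L * Q.card → Z.card ≤ L * R.card → ∀ x ∈ P,
      Q.card ≤ 4 * (Q.filter (G.Adj x)).card →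
      R.card ≤ 4 * (R.filter (fun y => ¬ G.Adj x y)).card →
      HasColourPurePair G c Z (12 * L) := by
    intro Q R hQ hR hPQ hPR hQR hQc hRc x hx hq hr
    have := hasColourPurePair_of_dominated (T := {x}) (N := Q.filter (G.Adj x))
      (M := R.filter (fun y => ¬ G.Adj x y)) (L := 4 * L) hZ (by simpa using hP hx)
      ((Finset.filter_subset _ _).trans hQ) ((Finset.filter_subset _ _).trans hR)
      (fun t ht y hy => hPQ t (Finset.mem_singleton.1 ht ▸ hx) y (Finset.mem_filter.1 hy).1)
      (fun t ht y hy => hPR t (Finset.mem_singleton.1 ht ▸ hx) y (Finset.mem_filter.1 hy).1)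
      (fun t ht y hy => hQR t (Finset.mem_filter.1 ht).1 y (Finset.mem_filter.1 hy).1)
      (fun y hy => ⟨x, by simp, (Finset.mem_filter.1 hy).2⟩)
      (fun y hy t ht => Finset.mem_singleton.1 ht ▸ (Finset.mem_filter.1 hy).2)
      (by nlinarith) (by nlinarith)
    rwa [← mul_assoc] at this
  by_cases hex : ∃ x ∈ P, (Q.card ≤ 4 * (Q.filter (G.Adj x)).card ∧
      R.card ≤ 4 * (R.filter (fun y => ¬ G.Adj x y)).card) ∨
      (R.card ≤ 4 * (R.filter (G.Adj x)).card ∧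
      Q.card ≤ 4 * (Q.filter (fun y => ¬ G.Adj x y)).card)
  · obtain ⟨x, hx, ⟨h1, h2⟩ | ⟨h1, h2⟩⟩ := hex
    · exact hmono (core Q R hQ hR hPQ hPR hQR hQc hRc x hx h1 h2)
    · exact hmono (core R Q hR hQ hPR hPQ (fun t ht y hy e => hQR y hy t ht e.symm) hRc hQc
        x hx h1 h2)
  · push Not at hex
    let low : V → Prop := fun x => 4 * (Q.filter (G.Adj x)).card < Q.card
    have hsum := Finset.card_filter_add_card_filter_not (s := P) low
    by_cases hhalf : P.card ≤ 2 * (P.filter low).card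
    · have := hasColourPurePair_of_sparse (P := P.filter low) (Q := Q) (R := R) (L := 2 * L) hZ
        ((Finset.filter_subset _ _).trans hP) hQ hR
        (fun t ht => hPQ t (Finset.mem_filter.1 ht).1)
        (fun t ht => hPR t (Finset.mem_filter.1 ht).1) hQR hZ0
        (by nlinarith) (by nlinarith) (by nlinarith)
        (fun x hx => (Finset.mem_filter.1 hx).2)
        (fun x hx => by
          rw [Finset.mem_filter] at hx
          have h1 := (hex x hx.1).2
          have h2 := hsplit x Q
          have h3 := hx.2
          simp only [low] at h3
          by_contra hcon
          have := h1 (by omega)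
          omega)
      rwa [← mul_assoc] at this
    · have hcompl : ∀ x, ∀ S : Finset V,
          S.filter (Gᶜ.Adj x) ⊆ S.filter (fun y => ¬ G.Adj x y) := fun x S y hy =>
        Finset.mem_filter.2 ⟨(Finset.mem_filter.1 hy).1,
          ((compl_adj _ _ _).1 (Finset.mem_filter.1 hy).2).2⟩
      have := hasColourPurePair_of_sparse (P := P.filter (fun x => ¬ low x)) (Q := Q) (R := R)
        (L := 2 * L) hZ.compl
        ((Finset.filter_subset _ _).trans hP) hQ hR
        (fun t ht => hPQ t (Finset.mem_filter.1 ht).1)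
        (fun t ht => hPR t (Finset.mem_filter.1 ht).1) hQR hZ0
        (by
          have : P.card ≤ 2 * (P.filter (fun x => ¬ low x)).card := by omega
          nlinarith) (by nlinarith) (by nlinarith)
        (fun x hx => by
          rw [Finset.mem_filter] at hx
          refine lt_of_le_of_lt (Nat.mul_le_mul_left 4 (Finset.card_le_card ?_)) (?_ :
            4 * (Q.filter (fun y => ¬ G.Adj x y)).card < _)
          · convert hcompl x Q
          have h0 := (hex x hx.1).1
          have h1 := (hex x hx.1).2
          have h2 := hsplit x Q
          have h2' := hsplit x R
          have h3 := hx.2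
          simp only [low] at h3
          have h4 := h0 (by omega)
          exact h1 (by omega))
        (fun x hx => by
          rw [Finset.mem_filter] at hx
          refine lt_of_le_of_lt (Nat.mul_le_mul_left 4 (Finset.card_le_card ?_)) (?_ :
            4 * (R.filter (fun y => ¬ G.Adj x y)).card < _)
          · convert hcompl x R
          have h3 := hx.2
          simp only [low] at h3
          exact (hex x hx.1).1 (by omega))
      rw [← mul_assoc] at this
      exact this.of_compl

/-- If all colour classes are small, some union of colour classes has roughly any given size. -/
lemma exists_colour_union {c : V → ι} {Z : Finset V} {s m : ℕ}
    (hs : ∀ i, (Z.filter (fun z => c z = i)).card ≤ s) (hm : m ≤ 4 * Z.card) :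
    ∃ I : Finset ι, m ≤ 4 * (Z.filter (fun z => c z ∈ I)).card ∧
      4 * (Z.filter (fun z => c z ∈ I)).card ≤ m + 4 * s := by
  let F := (Z.image c).powerset.filter (fun I => m ≤ 4 * (Z.filter (fun z => c z ∈ I)).card)
  have hF : F.Nonempty := by
    refine ⟨Z.image c, ?_⟩
    simp only [F, Finset.mem_filter, Finset.mem_powerset, subset_refl, true_and]
    rwa [Finset.filter_true_of_mem fun z hz => Finset.mem_image_of_mem c hz]
  obtain ⟨I, hI, hmin⟩ := Finset.exists_min_image F Finset.card hF
  simp only [F, Finset.mem_filter, Finset.mem_powerset] at hI hmin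
  refine ⟨I, hI.2, ?_⟩
  rcases I.eq_empty_or_nonempty with rfl | ⟨i, hi⟩
  · simp
  · have hlt : 4 * (Z.filter (fun z => c z ∈ I.erase i)).card < m := by
      by_contra hcon
      have := hmin (I.erase i) ⟨(Finset.erase_subset _ _).trans hI.1, by omega⟩
      rw [Finset.card_erase_of_mem hi] at this
      have := Finset.card_pos.2 ⟨i, hi⟩
      omega
    have hle : (Z.filter (fun z => c z ∈ I)).card ≤
        (Z.filter (fun z => c z ∈ I.erase i)).card + (Z.filter (fun z => c z = i)).card := by
      refine le_trans (Finset.card_le_card ?_) (Finset.card_union_le _ _)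
      intro z hz
      simp only [Finset.mem_filter, Finset.mem_union, Finset.mem_erase] at hz ⊢
      tauto
    have := hs i
    omega

/-- A set without rainbow induced four-vertex paths and with small colour classes contains a
complete or anticomplete pair of large subsets. -/
lemma exists_pure_pair_of_rainbowPathFree {G : SimpleGraph V} {c : V → ι} {Z : Finset V} {s : ℕ}
    (hZ : RainbowPathFree G c Z) (hs : ∀ i, (Z.filter (fun z => c z = i)).card ≤ s)
    (hs0 : 0 < s) (hbig : 192 * s ≤ Z.card) :
    ∃ U ⊆ Z, ∃ W ⊆ Z, Disjoint U W ∧ Z.card ≤ 384 * U.card ∧ Z.card ≤ 384 * W.card ∧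
      ((∀ u ∈ U, ∀ w ∈ W, G.Adj u w) ∨ (∀ u ∈ U, ∀ w ∈ W, ¬ G.Adj u w)) := by
  have hsub : ∀ Z' ⊆ Z, ∀ i, (Z'.filter (fun z => c z = i)).card ≤ s := fun Z' h i =>
    (Finset.card_le_card (Finset.filter_subset_filter _ h)).trans (hs i)
  obtain ⟨I, hI1, hI2⟩ := exists_colour_union (m := Z.card) hs (by omega)
  have hsumI := Finset.card_filter_add_card_filter_not (s := Z) (fun z => c z ∈ I)
  obtain ⟨K, hK1, hK2⟩ := exists_colour_union (m := Z.card)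
    (hsub (Z.filter (fun z => c z ∉ I)) (Finset.filter_subset _ _)) (by omega)
  have hsumK := Finset.card_filter_add_card_filter_not (s := Z.filter (fun z => c z ∉ I))
    (fun z => c z ∈ K)
  obtain ⟨U, hU, W, hW, hd, hUc, hWc, hpure⟩ := hasColourPurePair_of_separated (L := 4)
    (P := Z.filter (fun z => c z ∈ I)) (Q := (Z.filter (fun z => c z ∉ I)).filter (fun z => c z ∈ K))
    (R := (Z.filter (fun z => c z ∉ I)).filter (fun z => c z ∉ K)) hZ
    (Finset.filter_subset _ _) ((Finset.filter_subset _ _).trans (Finset.filter_subset _ _))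
    ((Finset.filter_subset _ _).trans (Finset.filter_subset _ _))
    (by
      intro t ht y hy e
      simp only [Finset.mem_filter] at ht hy
      exact hy.1.2 (e ▸ ht.2))
    (by
      intro t ht y hy e
      simp only [Finset.mem_filter] at ht hy
      exact hy.1.2 (e ▸ ht.2))
    (by
      intro t ht y hy e
      simp only [Finset.mem_filter] at ht hy
      exact hy.2 (e ▸ ht.2))
    (by omega) hI1 hK1 (by omega)
  obtain ⟨J, hJ1, hJ2⟩ := exists_colour_union (m := U.card) (hsub U hU) (by omega)
  have hsumU := Finset.card_filter_add_card_filter_not (s := U) (fun z => c z ∈ J)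
  have hsumW := Finset.card_filter_add_card_filter_not (s := W) (fun z => c z ∈ J)
  have fin : ∀ U' ⊆ U, ∀ W' ⊆ W, (∀ u ∈ U', ∀ w ∈ W', c u ≠ c w) →
      Z.card ≤ 384 * U'.card → Z.card ≤ 384 * W'.card →
      ∃ U ⊆ Z, ∃ W ⊆ Z, Disjoint U W ∧ Z.card ≤ 384 * U.card ∧ Z.card ≤ 384 * W.card ∧
      ((∀ u ∈ U, ∀ w ∈ W, G.Adj u w) ∨ (∀ u ∈ U, ∀ w ∈ W, ¬ G.Adj u w)) := by
    intro U' hU' W' hW' hc h1 h2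
    exact ⟨U', hU'.trans hU, W', hW'.trans hW, hd.mono hU' hW', h1, h2, hpure.imp
      (fun h u hu w hw => h u (hU' hu) w (hW' hw) (hc u hu w hw))
      (fun h u hu w hw => h u (hU' hu) w (hW' hw) (hc u hu w hw))⟩
  by_cases hW2 : W.card ≤ 2 * (W.filter (fun z => ¬ c z ∈ J)).card
  · exact fin _ (Finset.filter_subset (fun z => c z ∈ J) _) _
      (Finset.filter_subset (fun z => ¬ c z ∈ J) _)
      (fun u hu w hw e => (Finset.mem_filter.1 hw).2 (e ▸ (Finset.mem_filter.1 hu).2))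
      (by omega) (by omega)
  · exact fin _ (Finset.filter_subset (fun z => ¬ c z ∈ J) _) _
      (Finset.filter_subset (fun z => c z ∈ J) _)
      (fun u hu w hw e => (Finset.mem_filter.1 hu).2 (e ▸ (Finset.mem_filter.1 hw).2))
      (by omega) (by omega)

/-- A set without rainbow induced four-vertex paths has large `kappaIn` when its colour classes
are small. -/
lemma two_pow_mul_le_kappaIn {G : SimpleGraph V} {c : V → ι} {s : ℕ} {μ : ℝ} (hs0 : 0 < s) (j : ℕ) :
    ∀ {Z : Finset V}, RainbowPathFree G c Z → (∀ i, (Z.filter (fun z => c z = i)).card ≤ s) →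
    (∀ A ⊆ Z, s ≤ A.card → μ ≤ kappaIn G A) → 512 ^ j * s ≤ Z.card →
    2 ^ j * μ ≤ kappaIn G Z := by
  induction j with
  | zero =>
    intro Z _ _ hμ hc
    simpa using hμ Z subset_rfl (by simpa using hc)
  | succ j ih =>
    intro Z hZ hs hμ hc
    have hpow : 1 ≤ 512 ^ j := Nat.one_le_pow _ _ (by norm_num)
    have hle : s ≤ 512 ^ j * s := Nat.le_mul_of_pos_left _ hpow
    rw [pow_succ] at hc
    obtain ⟨U, hU, W, hW, hd, hUc, hWc, hpure⟩ := exists_pure_pair_of_rainbowPathFree hZ hs hs0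
      (by nlinarith)
    have hsub : ∀ Z' ⊆ Z, Z.card ≤ 384 * Z'.card → 2 ^ j * μ ≤ kappaIn G Z' := by
      intro Z' h hc'
      exact ih (hZ.mono h)
        (fun i => (Finset.card_le_card (Finset.filter_subset_filter _ h)).trans (hs i))
        (fun A hA => hμ A (hA.trans h)) (by nlinarith)
    have h1 := hsub U hU hUc
    have h2 := hsub W hW hWc
    have h3 : kappaIn G U + kappaIn G W ≤ kappaIn G Z := hpure.elim
      (fun h => kappaIn_add_le_of_complete hU hW h)
      (fun h => kappaIn_add_le_of_anticomplete hU hW hd h)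
    have h3' : (kappaIn G U : ℝ) + kappaIn G W ≤ kappaIn G Z := by exact_mod_cast h3
    rw [pow_succ]
    linarith

end Rainbow

section Comb

open scoped Classical

variable {V : Type*}

/-- The vertices of `B` whose only neighbour in `T` is `a`. -/
noncomputable def privateNbrs (G : SimpleGraph V) (T B : Finset V) (a : V) : Finset V :=
  B.filter (fun b => G.Adj a b ∧ ∀ a' ∈ T, G.Adj a' b → a' = a)

lemma privateNbrs_mono {G : SimpleGraph V} {T T' B B' : Finset V} (hT : T' ⊆ T) (hB : B ⊆ B')
    (a : V) : privateNbrs G T B a ⊆ privateNbrs G T' B' a := by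
  intro b hb
  rw [privateNbrs, Finset.mem_filter] at hb ⊢
  exact ⟨hB hb.1, hb.2.1, fun a' ha' => hb.2.2 a' (hT ha')⟩

/-- If every vertex of `U` has between one and four neighbours in `A`, then some subset of `A`
sees a constant fraction of `U` exactly once. -/
lemma exists_subset_unique_nbrs (G : SimpleGraph V) (A U : Finset V)
    (hpos : ∀ b ∈ U, 0 < (A.filter (fun a => G.Adj a b)).card)
    (hle : ∀ b ∈ U, (A.filter (fun a => G.Adj a b)).card ≤ 4) :
    ∃ S ⊆ A, U.card ≤
      16 * (U.filter (fun b => ∃ a ∈ S, G.Adj a b ∧ ∀ a' ∈ S, G.Adj a' b → a' = a)).card := by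
  let R : Finset V → V → Prop := fun S b => ∃ a ∈ S, G.Adj a b ∧ ∀ a' ∈ S, G.Adj a' b → a' = a
  have hcount : ∀ b ∈ U, 2 ^ A.card ≤ 16 * (A.powerset.filter (fun S => R S b)).card := by
    intro b hb
    set N := A.filter (fun a => G.Adj a b) with hN
    obtain ⟨a, ha⟩ := Finset.card_pos.1 (hpos b hb)
    have hNA : N ⊆ A := Finset.filter_subset _ _
    have haA := Finset.mem_filter.1 ha
    have hinj : (A \ N).powerset.card ≤ (A.powerset.filter (fun S => R S b)).card := by
      apply Finset.card_le_card_of_injOn (fun S => insert a S)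
      · intro S hS
        simp only [Finset.coe_powerset, Set.mem_preimage, Set.mem_powerset_iff, Finset.coe_subset] at hS
        simp only [Finset.coe_filter, Finset.mem_powerset, Set.mem_ofPred_eq]
        refine ⟨Finset.insert_subset haA.1 (hS.trans Finset.sdiff_subset), a,
          Finset.mem_insert_self _ _, haA.2, fun a' ha' hadj => ?_⟩
        rcases Finset.mem_insert.1 ha' with h | h
        · exact h
        · have := Finset.mem_sdiff.1 (hS h)
          exact absurd (Finset.mem_filter.2 ⟨this.1, hadj⟩) this.2
      · intro S hS S' hS' h
        simp only [Finset.coe_powerset, Set.mem_preimage, Set.mem_powerset_iff, Finset.coe_subset] at hS hS'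
        have hn : ∀ S'' ⊆ A \ N, a ∉ S'' := fun S'' h h' => (Finset.mem_sdiff.1 (h h')).2 ha
        have := congrArg (fun S => S.erase a) h
        simpa [Finset.erase_insert (hn S hS), Finset.erase_insert (hn S' hS')] using this
    rw [Finset.card_powerset] at hinj
    have hsd := Finset.card_sdiff_add_card_eq_card hNA
    rw [← hsd, pow_add]
    have : 2 ^ N.card ≤ 2 ^ 4 := Nat.pow_le_pow_right (by norm_num) (hle b hb)
    calc 2 ^ (A \ N).card * 2 ^ N.card ≤ 2 ^ (A \ N).card * 2 ^ 4 := Nat.mul_le_mul_left _ this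
      _ ≤ _ := by omega
  by_contra hcon
  push Not at hcon
  have hdc := Finset.sum_card_bipartiteAbove_eq_sum_card_bipartiteBelow (s := A.powerset) (t := U) R
  simp only [Finset.bipartiteAbove, Finset.bipartiteBelow] at hdc
  have h1 : ∑ S ∈ A.powerset, 16 * (U.filter (fun b => R S b)).card < ∑ S ∈ A.powerset, U.card :=
    Finset.sum_lt_sum_of_nonempty ⟨∅, by simp⟩ fun S hS => hcon S (Finset.mem_powerset.1 hS)
  have h2 : ∑ b ∈ U, 2 ^ A.card ≤ ∑ b ∈ U, 16 * (A.powerset.filter (fun S => R S b)).card :=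
    Finset.sum_le_sum hcount
  rw [← Finset.mul_sum, hdc, Finset.mul_sum] at h1
  simp only [Finset.sum_const, Finset.card_powerset, smul_eq_mul] at h1 h2
  rw [mul_comm] at h2
  omega

/-- A set `A` of vertices with at most `D` neighbours in `B` each and with a large joint
neighbourhood contains many vertices with many private neighbours. -/
lemma exists_comb_of_expanding (G : SimpleGraph V) (A B : Finset V) (D : ℕ) (hD : 0 < D)
    (hdeg : ∀ a ∈ A, (B.filter (G.Adj a)).card ≤ D)
    (hexp : A.card * D ≤ 2 * (B.filter (fun b => ∃ a ∈ A, G.Adj a b)).card) :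
    ∃ T ⊆ A, A.card ≤ 128 * T.card ∧ ∀ a ∈ T, D ≤ 128 * (privateNbrs G T B a).card := by
  set U := B.filter (fun b => ∃ a ∈ A, G.Adj a b) with hU
  have hdc : ∑ a ∈ A, (U.filter (G.Adj a)).card =
      ∑ b ∈ U, (A.filter (fun a => G.Adj a b)).card :=
    Finset.sum_card_bipartiteAbove_eq_sum_card_bipartiteBelow (s := A) (t := U) G.Adj
  have hUB : U ⊆ B := Finset.filter_subset _ _
  have hle : ∑ a ∈ A, (U.filter (G.Adj a)).card ≤ A.card * D := by
    rw [← smul_eq_mul]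
    exact Finset.sum_le_card_nsmul _ _ _ fun a ha =>
      (Finset.card_le_card (Finset.filter_subset_filter _ hUB)).trans (hdeg a ha)
  let q : V → Prop := fun b => (A.filter (fun a => G.Adj a b)).card ≤ 4
  have hsumU := Finset.card_filter_add_card_filter_not (s := U) q
  have hhigh : 5 * (U.filter (fun b => ¬ q b)).card ≤
      ∑ b ∈ U, (A.filter (fun a => G.Adj a b)).card := by
    calc 5 * (U.filter (fun b => ¬ q b)).card = (U.filter (fun b => ¬ q b)).card • 5 := by
          rw [smul_eq_mul, mul_comm]
      _ ≤ ∑ b ∈ U.filter (fun b => ¬ q b), (A.filter (fun a => G.Adj a b)).card := by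
          refine Finset.card_nsmul_le_sum _ _ _ fun b hb => ?_
          have := (Finset.mem_filter.1 hb).2
          simp only [q] at this
          omega
      _ ≤ _ := Finset.sum_le_sum_of_subset (Finset.filter_subset _ _)
  obtain ⟨S, hSA, hS⟩ := exists_subset_unique_nbrs G A (U.filter q)
    (fun b hb => by
      obtain ⟨a, ha, hab⟩ := (Finset.mem_filter.1 (Finset.mem_filter.1 hb).1).2
      exact Finset.card_pos.2 ⟨a, Finset.mem_filter.2 ⟨ha, hab⟩⟩)
    (fun b hb => (Finset.mem_filter.1 hb).2)
  have hcover : ((U.filter q).filter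
      (fun b => ∃ a ∈ S, G.Adj a b ∧ ∀ a' ∈ S, G.Adj a' b → a' = a)).card ≤
      ∑ a ∈ S, (privateNbrs G S B a).card := by
    refine le_trans (Finset.card_le_card ?_) Finset.card_biUnion_le
    intro b hb
    obtain ⟨hb1, a, ha, hab, huniq⟩ := Finset.mem_filter.1 hb
    rw [Finset.mem_biUnion]
    exact ⟨a, ha, Finset.mem_filter.2 ⟨hUB (Finset.mem_filter.1 hb1).1, hab, huniq⟩⟩
  let good : V → Prop := fun a => D ≤ 128 * (privateNbrs G S B a).card
  have hprivD : ∀ a ∈ S, (privateNbrs G S B a).card ≤ D := fun a ha =>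
    le_trans (Finset.card_le_card fun b hb => by
      rw [privateNbrs, Finset.mem_filter] at hb
      exact Finset.mem_filter.2 ⟨hb.1, hb.2.1⟩) (hdeg a (hSA ha))
  have hsplit : ∑ a ∈ S.filter good, (privateNbrs G S B a).card +
      ∑ a ∈ S.filter (fun a => ¬ good a), (privateNbrs G S B a).card =
      ∑ a ∈ S, (privateNbrs G S B a).card :=
    Finset.sum_filter_add_sum_filter_not S good _
  have hg : ∑ a ∈ S.filter good, (privateNbrs G S B a).card ≤ (S.filter good).card * D := by
    rw [← smul_eq_mul]
    exact Finset.sum_le_card_nsmul _ _ _ fun a ha => hprivD a (Finset.mem_filter.1 ha).1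
  have hb : 128 * ∑ a ∈ S.filter (fun a => ¬ good a), (privateNbrs G S B a).card ≤ A.card * D := by
    rw [Finset.mul_sum]
    calc _ ≤ (S.filter (fun a => ¬ good a)).card • D :=
          Finset.sum_le_card_nsmul _ _ _ fun a ha => by
            have := (Finset.mem_filter.1 ha).2
            simp only [good] at this
            omega
      _ ≤ A.card * D := by
          rw [smul_eq_mul]
          exact Nat.mul_le_mul_right _ (Finset.card_le_card ((Finset.filter_subset _ _).trans hSA))
  refine ⟨S.filter good, (Finset.filter_subset _ _).trans hSA, ?_, fun a ha => ?_⟩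
  · have : A.card * D ≤ 128 * (S.filter good).card * D := by
      rw [mul_assoc]
      omega
    exact Nat.le_of_mul_le_mul_right this hD
  · exact (Finset.mem_filter.1 ha).2.trans (Nat.mul_le_mul_left _ (Finset.card_le_card
      (privateNbrs_mono (Finset.filter_subset _ _) subset_rfl a)))

/-- If `A` covers `B` with degrees below `2 ^ j` and `A` contains no large comb, then `B` is
small. -/
lemma card_le_of_no_comb (G : SimpleGraph V) (A : Finset V) (n : ℕ) (j : ℕ) :
    ∀ B : Finset V, (∀ b ∈ B, ∃ a ∈ A, G.Adj a b) →
    (∀ a ∈ A, (B.filter (G.Adj a)).card < 2 ^ j) →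
    (∀ T ⊆ A, 512 ≤ T.card → ∃ a ∈ T, (privateNbrs G T B a).card * T.card ^ 2 < n) →
    (B.card : ℝ) ≤ 131072 * 2 ^ j + 6000 * √(n * 2 ^ j) := by
  induction j with
  | zero =>
    intro B hcov hdeg _
    have : B = ∅ := by
      rw [Finset.eq_empty_iff_forall_notMem]
      intro b hb
      obtain ⟨a, ha, hab⟩ := hcov b hb
      have h1 := hdeg a ha
      have h2 := Finset.card_pos.2 ⟨b, Finset.mem_filter.2 ⟨hb, hab⟩⟩
      omega
    rw [this]
    simp only [Finset.card_empty, Nat.cast_zero]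
    positivity
  | succ j ih =>
    intro B hcov hdeg hcomb
    let nb : Finset V → Finset V := fun T => B.filter (fun b => ∃ a ∈ T, G.Adj a b)
    let F := A.powerset.filter (fun T => T.card * 2 ^ j ≤ (nb T).card)
    have hF : F.Nonempty := ⟨∅, by simp [F]⟩
    obtain ⟨A', hA', hmax⟩ := Finset.exists_max_image F Finset.card hF
    simp only [F, Finset.mem_filter, Finset.mem_powerset] at hA' hmax
    obtain ⟨hA'A, hA'c⟩ := hA'
    have hnbB : nb A' ⊆ B := Finset.filter_subset _ _
    have hrest := ih (B \ nb A') (fun b hb => hcov b (Finset.mem_sdiff.1 hb).1)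
      (fun a ha => by
        by_contra hcon
        push Not at hcon
        have haA' : a ∉ A' := by
          intro haA'
          obtain ⟨b, hb⟩ := Finset.card_pos.1 (lt_of_lt_of_le (by positivity) hcon)
          obtain ⟨hb1, hb2⟩ := Finset.mem_filter.1 hb
          exact (Finset.mem_sdiff.1 hb1).2
            (Finset.mem_filter.2 ⟨(Finset.mem_sdiff.1 hb1).1, a, haA', hb2⟩)
        have hle : (nb A').card + ((B \ nb A').filter (G.Adj a)).card ≤ (nb (insert a A')).card := by
          rw [← Finset.card_union_of_disjoint]
          · apply Finset.card_le_card
            intro b hb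
            rcases Finset.mem_union.1 hb with hb | hb
            · obtain ⟨hb1, t, ht, htb⟩ := Finset.mem_filter.1 hb
              exact Finset.mem_filter.2 ⟨hb1, t, Finset.mem_insert_of_mem ht, htb⟩
            · obtain ⟨hb1, hb2⟩ := Finset.mem_filter.1 hb
              exact Finset.mem_filter.2 ⟨(Finset.mem_sdiff.1 hb1).1, a,
                Finset.mem_insert_self _ _, hb2⟩
          · exact Finset.disjoint_sdiff.mono_right (Finset.filter_subset _ _)
        have := hmax (insert a A') ⟨Finset.insert_subset ha hA'A, by
          rw [Finset.card_insert_of_notMem haA', add_mul]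
          omega⟩
        rw [Finset.card_insert_of_notMem haA'] at this
        omega)
      (fun T hT hTc => by
        obtain ⟨a, ha, h⟩ := hcomb T hT hTc
        exact ⟨a, ha, lt_of_le_of_lt (Nat.mul_le_mul_right _ (Finset.card_le_card
          (privateNbrs_mono subset_rfl Finset.sdiff_subset a))) h⟩)
    obtain ⟨T, hTA, hTc, hTp⟩ := exists_comb_of_expanding G A' B (2 ^ (j + 1)) (by positivity)
      (fun a ha => (hdeg a (hA'A ha)).le) (by
        change _ ≤ 2 * (nb A').card
        rw [pow_succ]
        nlinarith)
    have hnbc : (nb A').card ≤ A'.card * 2 ^ (j + 1) := by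
      have : nb A' ⊆ A'.biUnion (fun a => B.filter (G.Adj a)) := by
        intro b hb
        obtain ⟨hb1, t, ht, htb⟩ := Finset.mem_filter.1 hb
        exact Finset.mem_biUnion.2 ⟨t, ht, Finset.mem_filter.2 ⟨hb1, htb⟩⟩
      refine (Finset.card_le_card this).trans (Finset.card_biUnion_le.trans ?_)
      rw [← smul_eq_mul]
      exact Finset.sum_le_card_nsmul _ _ _ fun a ha => (hdeg a (hA'A ha)).le
    set x : ℝ := 2 ^ j with hx
    have hx0 : 0 < x := by positivity
    have hx2 : (2 : ℝ) ^ (j + 1) = 2 * x := by rw [pow_succ]; ring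
    have hTx : (T.card : ℝ) * x ≤ 512 * x + 8 * √(n * x) := by
      by_cases hT : 512 ≤ T.card
      · obtain ⟨a, ha, hlt⟩ := hcomb T (hTA.trans hA'A) hT
        have h1 := hTp a ha
        have h2 : 2 ^ (j + 1) * T.card ^ 2 ≤ 128 * n := by nlinarith
        have h3 : 2 * x * (T.card : ℝ) ^ 2 ≤ 128 * n := by rw [← hx2]; exact_mod_cast h2
        have h4 : (T.card : ℝ) * x ≤ √(64 * (n * x)) := by
          apply Real.le_sqrt_of_sq_le
          nlinarith
        have h5 : √(64 * ((n : ℝ) * x)) = 8 * √(n * x) := by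
          rw [Real.sqrt_mul (by norm_num), show (64 : ℝ) = 8 ^ 2 by norm_num,
            Real.sqrt_sq (by norm_num)]
        linarith
      · have : (T.card : ℝ) ≤ 512 := by exact_mod_cast (by omega : T.card ≤ 512)
        have := Real.sqrt_nonneg ((n : ℝ) * x)
        nlinarith
    have hsqrt : 1.4 * √((n : ℝ) * x) ≤ √(n * (2 * x)) := by
      rw [show (n : ℝ) * (2 * x) = 2 * (n * x) by ring,
        Real.sqrt_mul (by norm_num : (0 : ℝ) ≤ 2) (n * x)]
      refine mul_le_mul_of_nonneg_right ?_ (Real.sqrt_nonneg _)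
      apply Real.le_sqrt_of_sq_le
      norm_num
    have hcast : (B.card : ℝ) = (B \ nb A').card + (nb A').card := by
      rw [← Finset.card_sdiff_add_card_eq_card hnbB]; push_cast; rfl
    have hnbr : ((nb A').card : ℝ) ≤ A'.card * (2 * x) := by
      rw [← hx2]; exact_mod_cast hnbc
    have hTr : (A'.card : ℝ) ≤ 128 * T.card := by exact_mod_cast hTc
    have hfin : ((nb A').card : ℝ) ≤ 256 * (T.card * x) := by nlinarith
    have := Real.sqrt_nonneg ((n : ℝ) * x)
    rw [hx2, hcast]
    linarith

end Comb

/-- The induced copy of a star-expansion spanned by vertices `b i`, `a i` and `v` with the right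
adjacencies. -/
lemma nonempty_starExpansion_embedding {V W : Type*} {G : SimpleGraph V} {H : SimpleGraph W}
    (b a : W → V) (v : V) (hb : Function.Injective b) (ha : Function.Injective a)
    (hbb : ∀ i j, G.Adj (b i) (b j) ↔ H.Adj i j) (hba : ∀ i j, G.Adj (b i) (a j) ↔ i = j)
    (haa : ∀ i j, ¬ G.Adj (a i) (a j)) (hva : ∀ i, G.Adj v (a i)) (hvb : ∀ i, ¬ G.Adj v (b i))
    (hne : ∀ i, b i ≠ v) : Nonempty (starExpansion H ↪g G) := by
  have hba' : ∀ i j, b i ≠ a j := fun i j e => hvb i (e ▸ hva j)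
  have hav : ∀ i, a i ≠ v := fun i e => G.loopless.irrefl v (by simpa [e] using hva i)
  refine ⟨⟨⟨Sum.elim b (Sum.elim a fun _ => v), ?_⟩, ?_⟩⟩
  · rintro (i | i | i) (j | j | j) h
    · simpa using hb h
    · exact absurd h (hba' i j)
    · exact absurd h (hne i)
    · exact absurd h.symm (hba' j i)
    · simpa using ha h
    · exact absurd h (hav i)
    · exact absurd h.symm (hne j)
    · exact absurd h.symm (hav j)
    · rfl
  · rintro (i | i | i) (j | j | j)
    · change G.Adj (b i) (b j) ↔ _
      simp only [starExpansion, fromRel_adj, hbb]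
      constructor
      · exact fun h => ⟨by simpa using h.ne, Or.inl h⟩
      · exact fun h => h.2.elim id fun h => h.symm
    · change G.Adj (b i) (a j) ↔ _
      simp [starExpansion, hba]
    · change G.Adj (b i) v ↔ _
      simp [starExpansion, G.adj_comm (b i) v, hvb]
    · change G.Adj (a i) (b j) ↔ _
      simp [starExpansion, G.adj_comm (a i) (b j), hba]
    · change G.Adj (a i) (a j) ↔ _
      simp [starExpansion, haa]
    · change G.Adj (a i) v ↔ _
      simp [starExpansion, G.adj_comm (a i) v, hva]
    · change G.Adj v (b j) ↔ _
      simp [starExpansion, hvb]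
    · change G.Adj v (a j) ↔ _
      simp [starExpansion, hva]
    · change G.Adj v v ↔ _
      simp [starExpansion]

section Sparse

open scoped Classical

variable {V : Type*}

/-- A comb with a stable set of handles inside the neighbourhood of `v` has no rainbow induced
four-vertex path through its teeth, unless there is a star-expansion of a four-vertex path. -/
lemma rainbowPathFree_of_comb {G : SimpleGraph V}
    (hG : ¬ Nonempty (starExpansion (pathGraph 4) ↪g G)) {v : V} {T Z : Finset V} {c : V → V}
    (hT : ∀ a ∈ T, G.Adj v a) (hst : ∀ a ∈ T, ∀ a' ∈ T, ¬ G.Adj a a')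
    (hZv : ∀ b ∈ Z, b ≠ v ∧ ¬ G.Adj v b) (hcT : ∀ b ∈ Z, c b ∈ T)
    (hadj : ∀ b ∈ Z, ∀ a ∈ T, G.Adj a b ↔ a = c b) : RainbowPathFree G c Z := by
  intro x hx y hy z hz w hw hxy hxz hxw hyz hyw hzw axy ayz azw nxz nxw nyw
  let b : Fin 4 → V := ![x, y, z, w]
  have hbZ : ∀ i, b i ∈ Z := by
    intro i; fin_cases i <;> simp [b, hx, hy, hz, hw]
  have hinj : Function.Injective (fun i => c (b i)) := by
    intro i j h
    fin_cases i <;> fin_cases j <;> simp_all [b]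
  refine hG (nonempty_starExpansion_embedding b (fun i => c (b i)) v
    (fun i j h => hinj (by simp [h])) hinj ?_ ?_ (fun i j => hst _ (hcT _ (hbZ i)) _ (hcT _ (hbZ j)))
    (fun i => hT _ (hcT _ (hbZ i))) (fun i => (hZv _ (hbZ i)).2) (fun i => (hZv _ (hbZ i)).1))
  · intro i j
    rw [pathGraph_adj]
    fin_cases i <;> fin_cases j <;> simp [b, axy, ayz, azw, nxz, nxw, nyw, axy.symm, ayz.symm,
      azw.symm, G.adj_comm z x, G.adj_comm w x, G.adj_comm w y]
  · intro i j
    rw [G.adj_comm, hadj _ (hbZ i) _ (hcT _ (hbZ j))]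
    exact ⟨fun h => (hinj h).symm, fun h => h ▸ rfl⟩

/-- No comb with at least `512` handles and teeth of size at least `n / k ^ 2` exists below a vertex
of a set in which `kappaIn` decays slowly. -/
lemma no_comb_of_slow_decay {G : SimpleGraph V}
    (hG : ¬ Nonempty (starExpansion (pathGraph 4) ↪g G)) {Y : Finset V} (hY : Y.Nonempty)
    (hκ : ∀ A ⊆ Y, (kappaIn G Y : ℝ) * ((A.card : ℝ) / Y.card) ^ (1 / 72 : ℝ) ≤ kappaIn G A)
    {v : V} {T B : Finset V} (hB : B ⊆ Y) (hT : ∀ a ∈ T, G.Adj v a)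
    (hst : ∀ a ∈ T, ∀ a' ∈ T, ¬ G.Adj a a') (hBv : ∀ b ∈ B, b ≠ v ∧ ¬ G.Adj v b)
    (hTc : 512 ≤ T.card) :
    ∃ a ∈ T, (privateNbrs G T B a).card * T.card ^ 2 < Y.card := by
  by_contra hcon
  push Not at hcon
  have hn : 0 < Y.card := Finset.card_pos.2 hY
  set k := T.card with hk
  set s := ⌈(Y.card : ℝ) / k ^ 2⌉₊ with hs
  have hk0 : (0 : ℝ) < k := by exact_mod_cast (by omega : 0 < k)
  have hs0 : 0 < s := Nat.ceil_pos.2 (by positivity)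
  have hpriv : ∀ a ∈ T, ∃ β ⊆ privateNbrs G T B a, β.card = s := by
    intro a ha
    apply Finset.exists_subset_card_eq
    rw [hs, Nat.ceil_le, div_le_iff₀ (by positivity)]
    exact_mod_cast hcon a ha
  choose! β hβ hβc using hpriv
  have hpm : ∀ a ∈ T, ∀ b ∈ β a, b ∈ B ∧ G.Adj a b ∧ ∀ a' ∈ T, G.Adj a' b → a' = a :=
    fun a ha b hb => Finset.mem_filter.1 (hβ a ha hb)
  let Z := T.biUnion β
  have hZ : ∀ b ∈ Z, ∃ a, a ∈ T ∧ b ∈ β a := fun b hb => by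
    obtain ⟨a, ha, h⟩ := Finset.mem_biUnion.1 hb
    exact ⟨a, ha, h⟩
  choose! c hcT hcβ using hZ
  have hZB : Z ⊆ B := fun b hb => (hpm _ (hcT b hb) b (hcβ b hb)).1
  have hrain : RainbowPathFree G c Z := rainbowPathFree_of_comb hG hT hst
    (fun b hb => hBv b (hZB hb)) hcT (fun b hb a ha =>
      ⟨fun h => (hpm _ (hcT b hb) b (hcβ b hb)).2.2 a ha h,
        fun h => h ▸ (hpm _ (hcT b hb) b (hcβ b hb)).2.1⟩)
  have hclass : ∀ i, (Z.filter (fun z => c z = i)).card ≤ s := by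
    intro i
    by_cases hi : i ∈ T
    · rw [← hβc i hi]
      apply Finset.card_le_card
      intro b hb
      obtain ⟨hb1, rfl⟩ := Finset.mem_filter.1 hb
      exact hcβ b hb1
    · rw [Finset.filter_false_of_mem fun b hb (e : c b = i) => hi (e ▸ hcT b hb)]
      simp
  have hZc : Z.card = k * s := by
    rw [Finset.card_biUnion]
    · rw [Finset.sum_congr rfl hβc, Finset.sum_const, smul_eq_mul]
    · intro a ha a' ha' hne
      change Disjoint _ _
      rw [Finset.disjoint_left]
      intro b hb hb'
      exact hne ((hpm a' ha' b hb').2.2 a ha (hpm a ha b hb).2.1)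
  obtain ⟨j, hj1, hj2⟩ : ∃ j, 512 ^ j ≤ k ∧ k < 512 ^ (j + 1) :=
    ⟨Nat.log 512 k, Nat.pow_log_le_self _ (by omega), Nat.lt_pow_succ_log_self (by norm_num) _⟩
  have hj : 1 ≤ j := by
    by_contra h
    have : j = 0 := by omega
    subst this
    omega
  set μ : ℝ := kappaIn G Y * ((1 : ℝ) / k ^ 2) ^ (1 / 72 : ℝ) with hμ
  have hmain := two_pow_mul_le_kappaIn (μ := μ) hs0 j hrain hclass
    (fun A hA hAs => by
      refine le_trans ?_ (hκ A (hA.trans (hZB.trans hB)))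
      refine mul_le_mul_of_nonneg_left (Real.rpow_le_rpow (by positivity) ?_ (by norm_num))
        (by positivity)
      rw [le_div_iff₀ (by exact_mod_cast hn)]
      calc (1 : ℝ) / k ^ 2 * (Y.card : ℝ) = (Y.card : ℝ) / k ^ 2 := by ring
        _ ≤ (s : ℝ) := Nat.le_ceil _
        _ ≤ (A.card : ℝ) := by exact_mod_cast hAs)
    (by rw [hZc]; exact Nat.mul_le_mul_right _ hj1)
  have hκY : (0 : ℝ) < kappaIn G Y := by exact_mod_cast kappaIn_pos hY
  have hle : (kappaIn G Z : ℝ) ≤ kappaIn G Y := by exact_mod_cast kappaIn_mono (hZB.trans hB)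
  have hpow : ((2 : ℝ) ^ j)⁻¹ < ((1 : ℝ) / k ^ 2) ^ (1 / 72 : ℝ) := by
    have h1 : ((2 : ℝ) ^ (18 * (j + 1)))⁻¹ ≤ 1 / k ^ 2 := by
      rw [one_div]
      gcongr
      have : (k : ℝ) ≤ 512 ^ (j + 1) := by exact_mod_cast hj2.le
      calc (k : ℝ) ^ 2 ≤ (512 ^ (j + 1)) ^ 2 := by gcongr
        _ = 2 ^ (18 * (j + 1)) := by
          rw [show (512 : ℝ) = 2 ^ 9 by norm_num, ← pow_mul, ← pow_mul]
          congr 1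
          ring
    calc ((2 : ℝ) ^ j)⁻¹ = (2 : ℝ) ^ (-(j : ℝ)) := by
          rw [Real.rpow_neg (by norm_num), Real.rpow_natCast]
      _ < (2 : ℝ) ^ (-((18 * (j + 1) : ℕ) : ℝ) * (1 / 72)) := by
          apply Real.rpow_lt_rpow_of_exponent_lt (by norm_num)
          push_cast
          have : (1 : ℝ) ≤ j := by exact_mod_cast hj
          linarith
      _ = (((2 : ℝ) ^ (18 * (j + 1)))⁻¹) ^ (1 / 72 : ℝ) := by
          rw [Real.rpow_mul (by norm_num), Real.rpow_neg (by norm_num), Real.rpow_natCast]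
      _ ≤ _ := by gcongr
  have : (kappaIn G Y : ℝ) < 2 ^ j * μ := by
    rw [hμ]
    have h2 : (0 : ℝ) < 2 ^ j := by positivity
    rw [inv_lt_iff_one_lt_mul₀ h2] at hpow
    nlinarith
  linarith

/-- A graph without an induced star-expansion of the four-vertex path has no sparse set in which
`kappaIn` decays slowly. -/
lemma false_of_sparse_of_slow_decay {G : SimpleGraph V}
    (hG : ¬ Nonempty (starExpansion (pathGraph 4) ↪g G)) {Y : Finset V} (hY : 2 ≤ Y.card)
    (hdeg : ∀ v ∈ Y, ((Y.filter (G.Adj v)).card : ℝ) ≤ (1 / 10 ^ 24) * Y.card)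
    (hκ : ∀ A ⊆ Y, (kappaIn G Y : ℝ) * ((A.card : ℝ) / Y.card) ^ (1 / 72 : ℝ) ≤ kappaIn G A) :
    False := by
  have hYne : Y.Nonempty := Finset.card_pos.1 (by omega)
  have hn : (0 : ℝ) < Y.card := by exact_mod_cast (by omega : 0 < Y.card)
  have hω : (0 : ℝ) < cliqueNumIn G Y := by exact_mod_cast cliqueNumIn_pos hYne
  have hα : (0 : ℝ) < cliqueNumIn Gᶜ Y := by exact_mod_cast cliqueNumIn_pos hYne
  have hstable : ∀ A ⊆ Y, (cliqueNumIn Gᶜ Y : ℝ) * ((A.card : ℝ) / Y.card) ^ (1 / 72 : ℝ) ≤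
      cliqueNumIn Gᶜ A := by
    intro A hA
    have h1 := hκ A hA
    have h2 : (cliqueNumIn G A : ℝ) ≤ cliqueNumIn G Y := by exact_mod_cast cliqueNumIn_mono hA
    simp only [kappaIn, Nat.cast_mul] at h1
    have h3 : (0 : ℝ) ≤ cliqueNumIn Gᶜ A := by positivity
    refine le_of_mul_le_mul_left ?_ hω
    nlinarith
  obtain ⟨v, hv, hvmax⟩ := Finset.exists_max_image Y (fun v => (Y.filter (G.Adj v)).card) hYne
  set N := Y.filter (G.Adj v) with hN
  set Δ := N.card with hΔ
  have hΔ1 : 1 ≤ Δ := by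
    by_contra hcon
    have h0 : ∀ u ∈ Y, ∀ w ∈ Y, ¬ G.Adj u w := by
      intro u hu w hw h
      have := hvmax u hu
      have h2 := Finset.card_pos.2 ⟨w, Finset.mem_filter.2 ⟨hw, h⟩⟩
      omega
    have h1 : Y.card ≤ cliqueNumIn Gᶜ Y := card_le_cliqueNumIn subset_rfl (by
      intro u hu w hw hne
      exact (compl_adj _ _ _).2 ⟨hne, h0 u hu w hw⟩)
    have h2 := hstable {v} (by simpa using hv)
    have h3 : cliqueNumIn Gᶜ {v} ≤ 1 := by
      obtain ⟨S, hS, -, he⟩ := exists_clique_card_eq Gᶜ {v}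
      rw [← he]
      simpa using Finset.card_le_card hS
    have h4 : (cliqueNumIn Gᶜ {v} : ℝ) ≤ 1 := by exact_mod_cast h3
    have h5 : (Y.card : ℝ) ≤ cliqueNumIn Gᶜ Y := by exact_mod_cast h1
    have h7 : (2 : ℝ) ≤ Y.card := by exact_mod_cast hY
    have h6 : ((1 : ℝ) / Y.card) < (1 / Y.card : ℝ) ^ (1 / 72 : ℝ) := by
      conv_lhs => rw [← Real.rpow_one ((1 : ℝ) / Y.card)]
      apply Real.rpow_lt_rpow_of_exponent_gt (by positivity) _ (by norm_num)
      rw [div_lt_one hn]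
      linarith
    simp only [Finset.card_singleton, Nat.cast_one] at h2
    have h8 : (1 : ℝ) < Y.card * (1 / Y.card : ℝ) ^ (1 / 72 : ℝ) := by
      rw [div_lt_iff₀ hn] at h6
      linarith
    have h9 : (0 : ℝ) ≤ (1 / Y.card : ℝ) ^ (1 / 72 : ℝ) := by positivity
    nlinarith
  obtain ⟨S, hSN, hSc, hSe⟩ := exists_clique_card_eq Gᶜ N
  have hNY : N ⊆ Y := Finset.filter_subset _ _
  set U := Y.filter (fun y => y ∉ S ∧ ∀ a ∈ S, ¬ G.Adj a y) with hU
  set B := Y.filter (fun y => (y ≠ v ∧ ¬ G.Adj v y) ∧ ∃ a ∈ S, G.Adj a y) with hB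
  have hcover : Y.card ≤ U.card + B.card + Δ + 1 := by
    have : Y ⊆ ((U ∪ B) ∪ N) ∪ {v} := by
      intro y hy
      simp only [Finset.mem_union, Finset.mem_singleton, hU, hB, hN, Finset.mem_filter]
      by_cases h1 : y = v
      · exact Or.inr h1
      by_cases h2 : G.Adj v y
      · exact Or.inl (Or.inr ⟨hy, h2⟩)
      by_cases h3 : ∃ a ∈ S, G.Adj a y
      · exact Or.inl (Or.inl (Or.inr ⟨hy, ⟨h1, h2⟩, h3⟩))
      · push Not at h3
        exact Or.inl (Or.inl (Or.inl ⟨hy, fun hyS => h2 (Finset.mem_filter.1 (hSN hyS)).2, h3⟩))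
    refine (Finset.card_le_card this).trans ?_
    have e1 := Finset.card_union_le ((U ∪ B) ∪ N) {v}
    have e2 := Finset.card_union_le (U ∪ B) N
    have e3 := Finset.card_union_le U B
    rw [Finset.card_singleton] at e1
    omega
  have hadd : cliqueNumIn Gᶜ N + cliqueNumIn Gᶜ U ≤ cliqueNumIn Gᶜ Y := by
    have h1 : cliqueNumIn Gᶜ N ≤ cliqueNumIn Gᶜ S := hSe ▸ card_le_cliqueNumIn subset_rfl hSc
    have h2 : cliqueNumIn Gᶜ S + cliqueNumIn Gᶜ U ≤ cliqueNumIn Gᶜ Y :=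
      cliqueNumIn_add_le (hSN.trans hNY) (Finset.filter_subset _ _) (by
        intro a ha b hb
        obtain ⟨-, hb1, hb2⟩ := Finset.mem_filter.1 hb
        exact (compl_adj _ _ _).2 ⟨fun e => hb1 (e ▸ ha), hb2 a ha⟩)
    omega
  set x : ℝ := (Δ : ℝ) / Y.card with hx
  have hx0 : 0 < x := by
    have : (0 : ℝ) < Δ := by exact_mod_cast hΔ1
    positivity
  have hΔx : (Δ : ℝ) = x * Y.card := by rw [hx]; field_simp
  have hxs : x ≤ 1 / 10 ^ 24 := by
    rw [hx, div_le_iff₀ hn]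
    exact hdeg v hv
  have hUle : (U.card : ℝ) ≤ (1 - x ^ (1 / 72 : ℝ)) * Y.card := by
    have h1 := hstable N hNY
    have h2 := hstable U (Finset.filter_subset _ _)
    have h3 : (cliqueNumIn Gᶜ N : ℝ) + cliqueNumIn Gᶜ U ≤ cliqueNumIn Gᶜ Y := by
      exact_mod_cast hadd
    set y : ℝ := (U.card : ℝ) / Y.card with hy
    have hy0 : 0 ≤ y := div_nonneg (Nat.cast_nonneg _) hn.le
    have hy1 : y ≤ 1 := by
      rw [hy, div_le_one hn]
      exact_mod_cast Finset.card_le_card (Finset.filter_subset _ _ : U ⊆ Y)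
    have h4 : x ^ (1 / 72 : ℝ) + y ^ (1 / 72 : ℝ) ≤ 1 := by
      refine le_of_mul_le_mul_left ?_ hα
      rw [mul_add, mul_one]
      linarith
    have h5 : y ≤ y ^ (1 / 72 : ℝ) := by
      rcases hy0.eq_or_lt with h | h
      · rw [← h]; positivity
      · conv_lhs => rw [← Real.rpow_one y]
        exact Real.rpow_le_rpow_of_exponent_ge h hy1 (by norm_num)
    rw [← div_le_iff₀ hn]
    linarith
  obtain ⟨j, hj1, hj2⟩ : ∃ j, Δ < 2 ^ j ∧ 2 ^ j ≤ 2 * Δ :=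
    ⟨Nat.log 2 Δ + 1, Nat.lt_pow_succ_log_self (by norm_num) _, by
      have := Nat.pow_log_le_self 2 (by omega : Δ ≠ 0)
      rw [pow_succ]
      omega⟩
  have hBle := card_le_of_no_comb G S Y.card j B (fun b hb => (Finset.mem_filter.1 hb).2.2)
    (fun a ha => by
      refine lt_of_le_of_lt ?_ hj1
      exact (Finset.card_le_card (Finset.filter_subset_filter _ (Finset.filter_subset _ _))).trans
        (hvmax a (hNY (hSN ha))))
    (fun T hT hTc => no_comb_of_slow_decay hG hYne hκ (Finset.filter_subset _ _)
      (fun a ha => (Finset.mem_filter.1 (hSN (hT ha))).2)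
      (fun a ha a' ha' h => ((compl_adj _ _ _).1 (hSc (hT ha) (hT ha') h.ne)).2 h)
      (fun b hb => (Finset.mem_filter.1 hb).2.1) hTc)
  set r : ℝ := x ^ (1 / 4 : ℝ) with hr
  have hr0 : 0 < r := Real.rpow_pos_of_pos hx0 _
  have hr4 : r ^ 4 = x := by
    rw [hr, ← Real.rpow_natCast, ← Real.rpow_mul hx0.le]
    norm_num
  have hrs : r ≤ 1 / 10 ^ 6 := by
    by_contra hcon
    push Not at hcon
    have : (1 / 10 ^ 6 : ℝ) ^ 4 < r ^ 4 := by gcongr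
    rw [hr4] at this
    norm_num at this hxs
    linarith
  have hrx : r ≤ x ^ (1 / 72 : ℝ) :=
    Real.rpow_le_rpow_of_exponent_ge hx0 (hxs.trans (by norm_num)) (by norm_num)
  have hj2' : (2 : ℝ) ^ j ≤ 2 * (x * Y.card) := by
    rw [← hΔx]; exact_mod_cast hj2
  have hsq : √((Y.card : ℝ) * 2 ^ j) ≤ 2 * r ^ 2 * Y.card := by
    rw [Real.sqrt_le_left (mul_nonneg (mul_nonneg zero_le_two (sq_nonneg r)) hn.le)]
    rw [← hr4] at hj2'
    nlinarith [mul_le_mul_of_nonneg_left hj2' hn.le, sq_nonneg (r ^ 2 * Y.card)]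
  have hcov' : (Y.card : ℝ) ≤ U.card + B.card + Δ + 1 := by exact_mod_cast hcover
  have hΔ1' : (1 : ℝ) ≤ Δ := by exact_mod_cast hΔ1
  have hkey : r * Y.card ≤ (262146 * x + 12000 * r ^ 2) * Y.card := by
    have : r * (Y.card : ℝ) ≤ x ^ (1 / 72 : ℝ) * Y.card :=
      mul_le_mul_of_nonneg_right hrx hn.le
    nlinarith
  have hkey2 := le_of_mul_le_mul_right hkey hn
  rw [← hr4] at hkey2
  have hr2 : r ^ 2 ≤ 1 / 10 ^ 6 * r := by nlinarith
  have hr3 : r ^ 4 ≤ 1 / 10 ^ 6 * r := by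
    have : r ^ 2 ≤ 1 := by nlinarith
    nlinarith [sq_nonneg r]
  nlinarith

end Sparse

section Sparsification

variable {V : Type*}

open scoped Classical in
/-- The neighbours of `x` inside the finite set `X`. -/
noncomputable def nbrsIn (G : SimpleGraph V) (X : Finset V) (x : V) : Finset V :=
  X.filter (G.Adj x)

lemma mem_nbrsIn {G : SimpleGraph V} {X : Finset V} {x y : V} :
    y ∈ nbrsIn G X x ↔ y ∈ X ∧ G.Adj x y := by
  simp [nbrsIn]

lemma nbrsIn_mono {G : SimpleGraph V} {X Y : Finset V} (h : X ⊆ Y) (x : V) :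
    nbrsIn G X x ⊆ nbrsIn G Y x := fun y hy => by
  rw [mem_nbrsIn] at hy ⊢
  exact ⟨h hy.1, hy.2⟩

/-- Either a pattern on `h` vertices can be embedded with its vertices in prescribed parts, or
there are large subsets of two of the parts between which the graph is very sparse or very dense. -/
lemma exists_pattern_or_unbalanced_pair (G : SimpleGraph V) {ε : ℝ} (hε : 0 < ε) (hε1 : ε ≤ 1)
    (h : ℕ) :
    ∀ (H : SimpleGraph (Fin h)) (f : Fin h → Finset V) (m : ℝ), 0 < m →
      (∀ i j, i ≠ j → Disjoint (f i) (f j)) → (∀ i, m ≤ (f i).card) →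
      (∃ φ : Fin h → V, (∀ i, φ i ∈ f i) ∧ ∀ i j, i ≠ j → (G.Adj (φ i) (φ j) ↔ H.Adj i j)) ∨
      ∃ i j, i ≠ j ∧ ∃ A ⊆ f i, ∃ B ⊆ f j, ε ^ h / (h + 1) * m ≤ A.card ∧
        ε ^ h / (h + 1) * m ≤ B.card ∧
        ((∀ a ∈ A, ((nbrsIn G B a).card : ℝ) ≤ ε * B.card) ∨
          ∀ a ∈ A, ((nbrsIn Gᶜ B a).card : ℝ) ≤ ε * B.card) := by
  classical
  induction h with
  | zero => exact fun H f m _ _ _ => Or.inl ⟨fun i => i.elim0, fun i => i.elim0, fun i => i.elim0⟩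
  | succ h ih =>
    intro H f m hm hd hf
    let N : V → Fin h → Finset V :=
      fun v j => (f j.succ).filter (fun b => G.Adj v b ↔ H.Adj 0 j.succ)
    have hN : ∀ v j, N v j ⊆ f j.succ := fun v j => Finset.filter_subset _ _
    by_cases hv : ∃ v ∈ f 0, ∀ j, ε * (f j.succ).card ≤ (N v j).card
    · obtain ⟨v, hv0, hvN⟩ := hv
      rcases ih (H.comap Fin.succ) (N v) (ε * m) (mul_pos hε hm)
        (fun i j hij => (hd i.succ j.succ (by simpa using hij)).mono (hN v i) (hN v j))
        (fun j => (mul_le_mul_of_nonneg_left (hf j.succ) hε.le).trans (hvN j)) with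
        ⟨φ, hφ, hφH⟩ | ⟨i, j, hij, A, hA, B, hB, hAc, hBc, hAB⟩
      · left
        have hφ2 : ∀ j, G.Adj v (φ j) ↔ H.Adj 0 j.succ :=
          fun j => (Finset.mem_filter.1 (hφ j)).2
        refine ⟨Fin.cons v φ, ?_, ?_⟩
        · refine Fin.cases ?_ fun j => ?_
          · simpa using hv0
          · simpa using hN v j (hφ j)
        · refine Fin.cases ?_ fun i => ?_
          · refine Fin.cases (fun h => absurd rfl h) fun j _ => ?_
            simpa using hφ2 j
          · refine Fin.cases (fun _ => ?_) fun j hij => ?_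
            · simpa [G.adj_comm, H.adj_comm] using hφ2 i
            · simpa using hφH i j (by simpa using hij)
      · right
        have hc : ε ^ (h + 1) / ((h + 1 : ℕ) + 1 : ℝ) * m ≤ ε ^ h / (h + 1) * (ε * m) := by
          rw [pow_succ, div_mul_eq_mul_div, div_mul_eq_mul_div, ← mul_assoc]
          push_cast
          gcongr
          linarith
        exact ⟨i.succ, j.succ, by simpa using hij, A, hA.trans (hN v i), B, hB.trans (hN v j),
          hc.trans hAc, hc.trans hBc, hAB⟩
    · push Not at hv
      right
      have hh : 0 < h := by
        obtain ⟨v, hv0⟩ : (f 0).Nonempty :=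
          Finset.card_pos.1 (by exact_mod_cast hm.trans_le (hf 0))
        obtain ⟨j, -⟩ := hv v hv0
        exact j.pos
      have hh' : (0 : ℝ) < h := by exact_mod_cast hh
      have : NeZero h := ⟨hh.ne'⟩
      choose! g hg using hv
      obtain ⟨j, -, hj⟩ := Finset.exists_le_card_fiber_of_nsmul_le_card_of_maps_to
        (s := f 0) (t := Finset.univ) (f := g) (b := (m / h : ℝ)) (fun _ _ => Finset.mem_univ _)
        Finset.univ_nonempty (by
          rw [Finset.card_univ, Fintype.card_fin, nsmul_eq_mul, mul_div_cancel₀ _ hh'.ne']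
          exact hf 0)
      have hp : ε ^ (h + 1) ≤ 1 := pow_le_one₀ hε.le hε1
      have hp0 : 0 ≤ ε ^ (h + 1) := by positivity
      refine ⟨0, j.succ, (Fin.succ_ne_zero j).symm, _, Finset.filter_subset (fun v => g v = j) _,
        f j.succ, subset_rfl, le_trans ?_ hj, le_trans ?_ (hf _), ?_⟩
      · rw [div_mul_eq_mul_div]
        push_cast
        gcongr
        · nlinarith
        · linarith
      · rw [div_mul_eq_mul_div, div_le_iff₀ (by positivity)]
        push_cast
        nlinarith
      · have key : ∀ v ∈ (f 0).filter (fun v => g v = j),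
            ((N v j).card : ℝ) ≤ ε * (f j.succ).card := by
          intro v hv
          obtain ⟨hv0, rfl⟩ := Finset.mem_filter.1 hv
          exact (hg v hv0).le
        by_cases hH : H.Adj 0 j.succ
        · left
          refine fun v hv => le_trans ?_ (key v hv)
          gcongr
          intro b hb
          rw [mem_nbrsIn] at hb
          exact Finset.mem_filter.2 ⟨hb.1, by simp [hb.2, hH]⟩
        · right
          refine fun v hv => le_trans ?_ (key v hv)
          gcongr
          intro b hb
          rw [mem_nbrsIn, compl_adj] at hb
          exact Finset.mem_filter.2 ⟨hb.1, by simp [hb.2.2, hH]⟩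

lemma exists_disjoint_subsets_card_eq (q h : ℕ) :
    ∀ A : Finset V, h * q ≤ A.card → ∃ f : Fin h → Finset V,
      (∀ i j, i ≠ j → Disjoint (f i) (f j)) ∧ (∀ i, f i ⊆ A) ∧ ∀ i, (f i).card = q := by
  classical
  induction h with
  | zero => exact fun A _ => ⟨fun i => i.elim0, fun i => i.elim0, fun i => i.elim0,
      fun i => i.elim0⟩
  | succ h ih =>
    intro A hA
    rw [add_mul, one_mul] at hA
    obtain ⟨B, hB, hBq⟩ := Finset.exists_subset_card_eq (s := A) (n := q) (by omega)
    obtain ⟨f, hd, hfA, hfq⟩ := ih (A \ B) (by rw [Finset.card_sdiff_of_subset hB]; omega)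
    have hdB : ∀ i, Disjoint B (f i) := fun i =>
      Finset.disjoint_of_subset_right (hfA i) Finset.disjoint_sdiff
    refine ⟨Fin.cons B f, ?_, ?_, ?_⟩
    · refine Fin.cases ?_ fun i => ?_
      · refine Fin.cases (fun h => absurd rfl h) fun j _ => ?_
        simpa using hdB j
      · refine Fin.cases (fun _ => ?_) fun j hij => ?_
        · simpa using (hdB i).symm
        · simpa using hd i j (by simpa using hij)
    · refine Fin.cases (by simpa using hB) fun i => ?_
      simpa using (hfA i).trans Finset.sdiff_subset
    · refine Fin.cases (by simpa using hBq) fun i => ?_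
      simpa using hfq i

/-- A large set in a graph without an induced copy of `H` contains two disjoint large sets between
which the graph is very sparse or very dense. -/
lemma exists_unbalanced_pair {W : Type*} [Fintype W] (H : SimpleGraph W) {ε : ℝ} (hε : 0 < ε)
    (hε1 : ε ≤ 1) : ∃ c : ℝ, 0 < c ∧ c ≤ 1 ∧ ∀ (V : Type) (G : SimpleGraph V),
      ¬ Nonempty (H ↪g G) → ∀ X : Finset V, 1 ≤ c * X.card →
      ∃ A ⊆ X, ∃ B ⊆ X, Disjoint A B ∧ A.card ≤ B.card ∧ c * X.card ≤ A.card ∧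
        ((∀ a ∈ A, ((nbrsIn G B a).card : ℝ) ≤ ε * B.card) ∨
          ∀ a ∈ A, ((nbrsIn Gᶜ B a).card : ℝ) ≤ ε * B.card) := by
  set h := Fintype.card W with hh
  have e : W ≃ Fin h := Fintype.equivFin W
  set d : ℝ := ε ^ h / (h + 1) with hd
  have hd0 : 0 < d := by positivity
  have hd1 : d ≤ 1 := by
    rw [hd, div_le_one (by positivity)]
    have : ε ^ h ≤ 1 := pow_le_one₀ hε.le hε1
    have : (0 : ℝ) ≤ h := by positivity
    linarith
  refine ⟨d / (2 * (h + 1)), by positivity, ?_, ?_⟩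
  · rw [div_le_one (by positivity)]
    have : (0 : ℝ) ≤ h := by positivity
    linarith
  intro V G hG X hX
  set q := X.card / (h + 1) with hq
  have hXd : (h + 1 : ℝ) ≤ X.card := by
    rw [div_mul_eq_mul_div, le_div_iff₀ (by positivity)] at hX
    have : (0 : ℝ) ≤ h := by positivity
    nlinarith [(Nat.cast_nonneg X.card : (0 : ℝ) ≤ X.card)]
  have hXd' : h + 1 ≤ X.card := by exact_mod_cast hXd
  have hq1 : 1 ≤ q := (Nat.one_le_div_iff (by omega)).2 hXd'
  have hqX : (h + 1) * q ≤ X.card := Nat.mul_div_le _ _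
  have hqX2 : X.card ≤ 2 * (h + 1) * q := by
    have := Nat.lt_mul_div_succ X.card (by omega : 0 < h + 1)
    rw [← hq] at this
    nlinarith
  obtain ⟨f, hfd, hfX, hfq⟩ := exists_disjoint_subsets_card_eq q h X (by nlinarith)
  have hcX : d / (2 * (h + 1)) * X.card ≤ d * q := by
    rw [div_mul_eq_mul_div, div_le_iff₀ (by positivity)]
    have : (X.card : ℝ) ≤ 2 * (h + 1) * q := by exact_mod_cast hqX2
    nlinarith
  rcases exists_pattern_or_unbalanced_pair G hε hε1 h (H.comap e.symm) f q
    (by exact_mod_cast hq1) hfd (fun i => by rw [hfq]) with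
    ⟨φ, hφ, hφH⟩ | ⟨i, j, hij, A, hA, B, hB, hAc, hBc, hAB⟩
  · refine absurd ⟨⟨⟨fun w => φ (e w), ?_⟩, ?_⟩⟩ hG
    · intro x y hxy
      by_contra hne
      exact Finset.disjoint_left.1 (hfd (e x) (e y) (by simpa using hne)) (hφ _)
        ((show φ (e x) = φ (e y) from hxy) ▸ hφ (e y))
    · intro x y
      change G.Adj (φ (e x)) (φ (e y)) ↔ H.Adj x y
      by_cases hxy : x = y
      · simp [hxy]
      · simpa using hφH (e x) (e y) (by simpa using hxy)
  · obtain ⟨A', hA', hA'c⟩ := Finset.exists_subset_card_eq (min_le_left A.card B.card)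
    refine ⟨A', hA'.trans (hA.trans (hfX i)), B, hB.trans (hfX j),
      (hfd i j hij).mono (hA'.trans hA) hB, by omega, ?_, ?_⟩
    · rw [hA'c]
      push_cast
      exact le_min (hcX.trans hAc) (hcX.trans hBc)
    · exact hAB.imp (fun h a ha => h a (hA' ha)) (fun h a ha => h a (hA' ha))

/-- Some subset of prescribed size has at most average sum. -/
lemma exists_subset_sum_le_average (g : V → ℝ) (s : ℕ) (B : Finset V) (hs : s ≤ B.card) :
    ∃ C ⊆ B, C.card = s ∧ (∑ x ∈ C, g x) * B.card ≤ s * ∑ x ∈ B, g x := by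
  classical
  obtain ⟨k, hk⟩ := Nat.exists_eq_add_of_le hs
  induction k generalizing B with
  | zero => exact ⟨B, subset_rfl, by omega, by rw [hk, add_zero, mul_comm]⟩
  | succ k ih =>
    obtain ⟨x, hx, hmax⟩ := Finset.exists_max_image B g (Finset.card_pos.1 (by omega))
    have hc := Finset.card_erase_of_mem hx
    obtain ⟨C, hC, hCs, hsum⟩ := ih (B.erase x) (by omega) (by omega)
    refine ⟨C, hC.trans (Finset.erase_subset _ _), hCs, ?_⟩
    have h1 : ((B.erase x).card : ℝ) = B.card - 1 := by
      rw [hc, Nat.cast_sub (by omega), Nat.cast_one]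
    rw [h1] at hsum
    have h2 := Finset.add_sum_erase B g hx
    have h3 : ∑ y ∈ C, g y ≤ s * g x := by
      rw [← hCs, ← nsmul_eq_mul]
      exact Finset.sum_le_card_nsmul _ _ _ fun y hy => hmax y (Finset.mem_of_mem_erase (hC hy))
    rw [← h2]
    linarith

/-- The number of adjacent ordered pairs in `X × Y`. -/
noncomputable def edgeCount (G : SimpleGraph V) (X Y : Finset V) : ℝ :=
  ∑ x ∈ X, ((nbrsIn G Y x).card : ℝ)

lemma edgeCount_comm (G : SimpleGraph V) (X Y : Finset V) : edgeCount G X Y = edgeCount G Y X := by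
  classical
  have h : ∀ X Y : Finset V,
      edgeCount G X Y = ∑ x ∈ X, ∑ y ∈ Y, if G.Adj x y then (1 : ℝ) else 0 := by
    intro X Y
    refine Finset.sum_congr rfl fun x _ => ?_
    rw [Finset.sum_boole]
    rfl
  rw [h, h, Finset.sum_comm]
  simp only [G.adj_comm]

lemma edgeCount_le_card_mul_card (G : SimpleGraph V) (X Y : Finset V) :
    edgeCount G X Y ≤ X.card * Y.card := by
  rw [← nsmul_eq_mul]
  refine Finset.sum_le_card_nsmul _ _ _ fun x _ => ?_
  exact_mod_cast Finset.card_le_card (fun y hy => (mem_nbrsIn.1 hy).1)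

open scoped Classical in
lemma edgeCount_union {G : SimpleGraph V} {X Y : Finset V} (h : Disjoint X Y) :
    edgeCount G (X ∪ Y) (X ∪ Y) = edgeCount G X X + 2 * edgeCount G X Y + edgeCount G Y Y := by
  have hu : ∀ Z : Finset V, edgeCount G Z (X ∪ Y) = edgeCount G Z X + edgeCount G Z Y := by
    intro Z
    rw [edgeCount, edgeCount, edgeCount, ← Finset.sum_add_distrib]
    refine Finset.sum_congr rfl fun z _ => ?_
    rw [← Nat.cast_add, ← Finset.card_union_of_disjoint]
    · congr 2
      ext y
      simp [mem_nbrsIn, or_and_right]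
    · exact h.mono (fun y hy => (mem_nbrsIn.1 hy).1) (fun y hy => (mem_nbrsIn.1 hy).1)
  rw [hu, edgeCount_comm G _ X, edgeCount_comm G _ Y, hu, hu, edgeCount_comm G Y X]
  ring

/-- A sparse set can be extended by one more block, provided there are few edges to the reservoir
from which the block is taken. -/
lemma exists_sparse_extension {G : SimpleGraph V} {ε : ℝ} {p s : ℕ} {X B : Finset V}
    (hXB : Disjoint X B) (hs : s ≤ B.card) (hs0 : 0 < s) (hX : X.card = p * s)
    (he : edgeCount G X X ≤ (p + p ^ 2 * ε) * s ^ 2) (hε : 0 < ε)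
    (hd : ∀ x ∈ X, ((nbrsIn G B x).card : ℝ) ≤ ε * B.card) :
    ∃ Y, (∀ y ∈ Y, y ∈ X ∨ y ∈ B) ∧ Y.card = (p + 1) * s ∧
      edgeCount G Y Y ≤ ((p + 1 : ℕ) + (p + 1 : ℕ) ^ 2 * ε) * s ^ 2 := by
  classical
  obtain ⟨C, hC, hCs, hCe⟩ := exists_subset_sum_le_average
    (fun b => ((nbrsIn G X b).card : ℝ)) s B hs
  have hXC : Disjoint X C := Finset.disjoint_of_subset_right hC hXB
  refine ⟨X ∪ C, fun y hy => ?_, ?_, ?_⟩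
  · exact (Finset.mem_union.1 hy).imp id fun h => hC h
  · rw [Finset.card_union_of_disjoint hXC, hX, hCs]; ring
  · rw [edgeCount_union hXC]
    have hB0 : (0 : ℝ) < B.card := by exact_mod_cast lt_of_lt_of_le hs0 hs
    have h1 : edgeCount G X B ≤ (p * s) * (ε * B.card) := by
      have : ((X.card : ℕ) : ℝ) = p * s := by rw [hX]; push_cast; rfl
      rw [← this, ← nsmul_eq_mul]
      exact Finset.sum_le_card_nsmul _ _ _ hd
    have h2 : edgeCount G C X * B.card ≤ s * edgeCount G B X := hCe
    have h3 : edgeCount G X C ≤ ε * p * s ^ 2 := by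
      rw [edgeCount_comm]
      refine le_of_mul_le_mul_right ?_ hB0
      rw [edgeCount_comm G B] at h2
      have hs' : (0 : ℝ) ≤ s := by positivity
      nlinarith [mul_le_mul_of_nonneg_left h1 hs']
    have h4 := edgeCount_le_card_mul_card G C C
    rw [hCs] at h4
    push_cast
    nlinarith [mul_pos hε (pow_pos (by exact_mod_cast hs0 : (0 : ℝ) < s) 2)]

/-- In a graph without an induced copy of `H` every large set contains a sparse union of `p` blocks,
or a union of `q` blocks sparse in the complement. -/
lemma exists_sparse_blocks {W : Type*} [Fintype W] (H : SimpleGraph W) {ε : ℝ} (hε : 0 < ε)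
    (hε1 : ε ≤ 1) (t : ℕ) : ∀ p q : ℕ, p + q = t → ∃ δ : ℝ, 0 < δ ∧
      ∀ (V : Type) (G : SimpleGraph V), ¬ Nonempty (H ↪g G) → ∀ A : Finset V, 1 ≤ δ * A.card →
      ∃ s : ℕ, δ * A.card ≤ s ∧ s ≤ A.card ∧ ∃ X ⊆ A,
        (X.card = p * s ∧ edgeCount G X X ≤ (p + p ^ 2 * ε) * s ^ 2) ∨
        (X.card = q * s ∧ edgeCount Gᶜ X X ≤ (q + q ^ 2 * ε) * s ^ 2) := by
  induction t with
  | zero =>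
    intro p q hpq
    obtain ⟨rfl, rfl⟩ : p = 0 ∧ q = 0 := by omega
    exact ⟨1, one_pos, fun V G _ A _ => ⟨A.card, by simp, le_rfl, ∅, by simp,
      Or.inl ⟨by simp, by simp [edgeCount]⟩⟩⟩
  | succ t ih =>
    intro p q hpq
    rcases p with _ | p
    · exact ⟨1, one_pos, fun V G _ A _ => ⟨A.card, by simp, le_rfl, ∅, by simp,
        Or.inl ⟨by simp, by simp [edgeCount]⟩⟩⟩
    rcases q with _ | q
    · exact ⟨1, one_pos, fun V G _ A _ => ⟨A.card, by simp, le_rfl, ∅, by simp,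
        Or.inr ⟨by simp, by simp [edgeCount]⟩⟩⟩
    obtain ⟨δ₁, hδ₁, ih₁⟩ := ih p (q + 1) (by omega)
    obtain ⟨δ₂, hδ₂, ih₂⟩ := ih (p + 1) q (by omega)
    obtain ⟨c, hc, hc1, hpair⟩ := exists_unbalanced_pair H hε hε1
    set δ := c * min 1 (min δ₁ δ₂) with hδ
    have hm : 0 < min 1 (min δ₁ δ₂) := lt_min one_pos (lt_min hδ₁ hδ₂)
    refine ⟨δ, mul_pos hc hm, fun V G hG A hA => ?_⟩
    have hA0 : (0 : ℝ) ≤ A.card := by positivity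
    have hδc : δ ≤ c := mul_le_of_le_one_right hc.le (min_le_left _ _)
    obtain ⟨X, hXA, B, hBA, hXB, hcard, hXc, hsp⟩ := hpair V G hG A
      (hA.trans (mul_le_mul_of_nonneg_right hδc hA0))
    have hgrow : ∀ δ' : ℝ, min 1 (min δ₁ δ₂) ≤ δ' → δ * A.card ≤ δ' * X.card := by
      intro δ' hδ'
      calc δ * A.card = min 1 (min δ₁ δ₂) * (c * A.card) := by rw [hδ]; ring
        _ ≤ δ' * X.card := mul_le_mul hδ' hXc (by positivity) (hm.le.trans hδ')
    have hle₁ := hgrow δ₁ ((min_le_right _ _).trans (min_le_left _ _))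
    have hle₂ := hgrow δ₂ ((min_le_right _ _).trans (min_le_right _ _))
    have hpos : ∀ s : ℕ, δ * A.card ≤ s → 0 < s := fun s h => by
      exact_mod_cast lt_of_lt_of_le one_pos (hA.trans h)
    rcases hsp with hsp | hsp
    · obtain ⟨s, hs, hsX, Z, hZ, hZs⟩ := ih₁ V G hG X (hA.trans hle₁)
      refine ⟨s, hle₁.trans hs, hsX.trans (Finset.card_le_card hXA), ?_⟩
      rcases hZs with ⟨hZc, hZe⟩ | hZs
      · obtain ⟨Y, hY, hYc, hYe⟩ := exists_sparse_extension (hXB.mono_left hZ) (hsX.trans hcard)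
          (hpos s (hle₁.trans hs)) hZc hZe hε (fun x hx => hsp x (hZ hx))
        exact ⟨Y, fun y hy => (hY y hy).elim (fun h => hXA (hZ h)) (fun h => hBA h),
          Or.inl ⟨hYc, hYe⟩⟩
      · exact ⟨Z, hZ.trans hXA, Or.inr hZs⟩
    · obtain ⟨s, hs, hsX, Z, hZ, hZs⟩ := ih₂ V G hG X (hA.trans hle₂)
      refine ⟨s, hle₂.trans hs, hsX.trans (Finset.card_le_card hXA), ?_⟩
      rcases hZs with hZs | ⟨hZc, hZe⟩
      · exact ⟨Z, hZ.trans hXA, Or.inl hZs⟩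
      · obtain ⟨Y, hY, hYc, hYe⟩ := exists_sparse_extension (hXB.mono_left hZ) (hsX.trans hcard)
          (hpos s (hle₂.trans hs)) hZc hZe hε (fun x hx => hsp x (hZ hx))
        exact ⟨Y, fun y hy => (hY y hy).elim (fun h => hXA (hZ h)) (fun h => hBA h),
          Or.inr ⟨hYc, hYe⟩⟩

/-- Deleting the vertices of large degree from a set of small average degree. -/
lemma exists_subset_small_degree {G : SimpleGraph V} {X : Finset V} {η : ℝ} (hη : 0 < η)
    (he : edgeCount G X X ≤ η * X.card ^ 2) :
    ∃ Y ⊆ X, (X.card : ℝ) ≤ 2 * Y.card ∧ ∀ y ∈ Y, ((nbrsIn G Y y).card : ℝ) ≤ 4 * η * Y.card := by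
  classical
  set Z := X.filter (fun x => 2 * η * X.card < (nbrsIn G X x).card) with hZ
  have hZX : Z ⊆ X := Finset.filter_subset _ _
  have h1 : Z.card * (2 * η * X.card) ≤ edgeCount G X X := by
    rw [← nsmul_eq_mul]
    refine (Finset.card_nsmul_le_sum Z (fun x => ((nbrsIn G X x).card : ℝ)) _
      fun x hx => (Finset.mem_filter.1 hx).2.le).trans ?_
    exact Finset.sum_le_sum_of_subset_of_nonneg hZX fun _ _ _ => by positivity
  have h2 : (2 : ℝ) * Z.card ≤ X.card := by
    rcases X.card.eq_zero_or_pos with h | h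
    · have := Finset.card_le_card hZX
      have h0 : Z.card = 0 := by omega
      simp [h0]
    · have hX : (0 : ℝ) < X.card := by exact_mod_cast h
      refine le_of_mul_le_mul_right ?_ (mul_pos hη hX)
      nlinarith
  have h3 : ((X \ Z).card : ℝ) = X.card - Z.card := by
    rw [Finset.card_sdiff_of_subset hZX, Nat.cast_sub (Finset.card_le_card hZX)]
  have h4 : (X.card : ℝ) ≤ 2 * (X \ Z).card := by rw [h3]; linarith
  refine ⟨X \ Z, Finset.sdiff_subset, h4, fun y hy => ?_⟩
  obtain ⟨hyX, hyZ⟩ := Finset.mem_sdiff.1 hy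
  have h5 : ((nbrsIn G X y).card : ℝ) ≤ 2 * η * X.card := by
    by_contra h
    exact hyZ (Finset.mem_filter.2 ⟨hyX, not_le.1 h⟩)
  have h6 : ((nbrsIn G (X \ Z) y).card : ℝ) ≤ (nbrsIn G X y).card := by
    exact_mod_cast Finset.card_le_card (nbrsIn_mono Finset.sdiff_subset y)
  nlinarith [mul_le_mul_of_nonneg_left h4 (by positivity : 0 ≤ 2 * η)]

/-- Rödl's theorem: in a graph without an induced copy of `H` every set contains a linear-size
subset in which the graph or its complement has small maximum degree. -/
lemma exists_sparse_or_dense_subset {W : Type*} [Fintype W] (H : SimpleGraph W) {η : ℝ}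
    (hη : 0 < η) : ∃ δ : ℝ, 0 < δ ∧ ∀ (V : Type) (G : SimpleGraph V), ¬ Nonempty (H ↪g G) →
      ∀ A : Finset V, 1 ≤ δ * A.card → ∃ X ⊆ A, δ * A.card ≤ X.card ∧
        ((∀ x ∈ X, ((nbrsIn G X x).card : ℝ) ≤ η * X.card) ∨
          ∀ x ∈ X, ((nbrsIn Gᶜ X x).card : ℝ) ≤ η * X.card) := by
  obtain ⟨p, hp⟩ := exists_nat_ge (max 2 (8 / η))
  have hp2 : (2 : ℝ) ≤ p := (le_max_left _ _).trans hp
  have hpη : 8 ≤ η * p := by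
    have := (le_max_right _ _).trans hp
    rwa [div_le_iff₀ hη, mul_comm] at this
  obtain ⟨δ, hδ, hblocks⟩ := exists_sparse_blocks H (ε := 1 / p) (by positivity)
    (by rw [div_le_one (by positivity)]; linarith) (p + p) p p rfl
  refine ⟨δ, hδ, fun V G hG A hA => ?_⟩
  obtain ⟨s, hs, -, X, hXA, hX⟩ := hblocks V G hG A hA
  have hs0 : (0 : ℝ) ≤ s := by positivity
  have finish : ∀ G' : SimpleGraph V, X.card = p * s →
      edgeCount G' X X ≤ (p + p ^ 2 * (1 / p)) * s ^ 2 → ∃ Y ⊆ A, δ * A.card ≤ Y.card ∧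
        ∀ y ∈ Y, ((nbrsIn G' Y y).card : ℝ) ≤ η * Y.card := by
    intro G' hXc hXe
    have hXc' : (X.card : ℝ) = p * s := by rw [hXc]; push_cast; rfl
    obtain ⟨Y, hY, hXY, hdeg⟩ := exists_subset_small_degree (G := G') (X := X)
      (η := η / 4) (by positivity) (by
        refine hXe.trans ?_
        rw [hXc']
        have : (p : ℝ) + p ^ 2 * (1 / p) = 2 * p := by field_simp; ring
        rw [this, mul_pow]
        nlinarith [mul_le_mul_of_nonneg_right hpη (by positivity : 0 ≤ (p : ℝ) * s ^ 2)])
    refine ⟨Y, hY.trans hXA, ?_, fun y hy => (hdeg y hy).trans (le_of_eq (by ring))⟩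
    nlinarith
  rcases hX with ⟨h1, h2⟩ | ⟨h1, h2⟩
  · obtain ⟨Y, hY, hYc, h⟩ := finish G h1 h2
    exact ⟨Y, hY, hYc, Or.inl h⟩
  · obtain ⟨Y, hY, hYc, h⟩ := finish Gᶜ h1 h2
    exact ⟨Y, hY, hYc, Or.inr h⟩

end Sparsification

section Main

/-- Inside every nonempty finite set there is a nonempty subset in which `kappaIn` decays slowly, and
on which it is small compared with its value on the whole set. -/
lemma exists_slow_decay_subset {V : Type*} (G : SimpleGraph V) {X : Finset V} (hX : X.Nonempty)
    {σ : ℝ} (hσ : 0 < σ) :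
    ∃ Y ⊆ X, Y.Nonempty ∧
      (∀ A ⊆ Y, (kappaIn G Y : ℝ) * ((A.card : ℝ) / Y.card) ^ σ ≤ kappaIn G A) ∧
      (kappaIn G Y : ℝ) ≤ kappaIn G X * ((Y.card : ℝ) / X.card) ^ σ := by
  classical
  obtain ⟨Y, hY, hmin⟩ := Finset.exists_min_image (X.powerset.filter Finset.Nonempty)
    (fun A => (kappaIn G A : ℝ) / (A.card : ℝ) ^ σ)
    ⟨X, Finset.mem_filter.2 ⟨Finset.mem_powerset_self X, hX⟩⟩
  obtain ⟨hYX, hYne⟩ := Finset.mem_filter.1 hY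
  rw [Finset.mem_powerset] at hYX
  have hpos : ∀ {A : Finset V}, A.Nonempty → (0 : ℝ) < (A.card : ℝ) ^ σ := fun h =>
    Real.rpow_pos_of_pos (by exact_mod_cast Finset.card_pos.2 h) _
  have hdiv : ∀ A B : Finset V, ((A.card : ℝ) / B.card) ^ σ = (A.card : ℝ) ^ σ / (B.card : ℝ) ^ σ :=
    fun A B => Real.div_rpow (by positivity) (by positivity) _
  have hle : ∀ A ⊆ X, A.Nonempty →
      (kappaIn G Y : ℝ) / (Y.card : ℝ) ^ σ ≤ (kappaIn G A : ℝ) / (A.card : ℝ) ^ σ :=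
    fun A hA hne => hmin A (Finset.mem_filter.2 ⟨Finset.mem_powerset.2 hA, hne⟩)
  refine ⟨Y, hYX, hYne, fun A hA => ?_, ?_⟩
  · rcases A.eq_empty_or_nonempty with rfl | hne
    · simp [Real.zero_rpow hσ.ne']
    · have := hle A (hA.trans hYX) hne
      rw [le_div_iff₀ (hpos hne)] at this
      rw [hdiv]
      calc _ = (kappaIn G Y : ℝ) / (Y.card : ℝ) ^ σ * (A.card : ℝ) ^ σ := by ring
        _ ≤ _ := this
  · have := hle X subset_rfl hX
    rw [div_le_iff₀ (hpos hYne)] at this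
    rw [hdiv]
    calc _ ≤ _ := this
      _ = _ := by ring

/-- In graphs without an induced star-expansion of the four-vertex path or its complement, `kappaIn`
grows polynomially. -/
lemma exists_card_rpow_le_kappaIn : ∃ τ : ℝ, 0 < τ ∧ ∀ (V : Type) (G : SimpleGraph V),
    ¬ Nonempty (starExpansion (pathGraph 4) ↪g G) →
    ¬ Nonempty ((starExpansion (pathGraph 4))ᶜ ↪g G) →
    ∀ A : Finset V, (A.card : ℝ) ^ τ ≤ kappaIn G A := by
  obtain ⟨δ, hδ, hR⟩ := exists_sparse_or_dense_subset (starExpansion (pathGraph 4))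
    (η := 1 / 10 ^ 24 / 2) (by norm_num)
  obtain ⟨M, hM⟩ := exists_pow_lt_of_lt_one (by positivity : 0 < δ / 4)
    (by norm_num : (1 / 2 : ℝ) < 1)
  set σ : ℝ := 1 / 72 with hσ
  set τ : ℝ := σ / (M + 1) with hτ
  have hσ0 : 0 < σ := by norm_num [hσ]
  have hτ0 : 0 < τ := by positivity
  have hτσ : ((M + 1 : ℕ) : ℝ) * τ = σ := by
    rw [hτ]; push_cast; field_simp
  refine ⟨τ, hτ0, fun V G hG hG' A => ?_⟩
  induction A using Finset.strongInduction with
  | H A ih =>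
  by_contra! hA
  have hA2 : 2 ≤ A.card := by
    by_contra h
    obtain h | h : A.card = 0 ∨ A.card = 1 := by omega
    · rw [h, Nat.cast_zero, Real.zero_rpow hτ0.ne'] at hA
      exact absurd hA (not_lt.2 (Nat.cast_nonneg _))
    · have : 0 < kappaIn G A := kappaIn_pos (Finset.card_pos.1 (by omega))
      rw [h, Nat.cast_one, Real.one_rpow] at hA
      norm_cast at hA
      omega
  have hA0 : (0 : ℝ) < A.card := by exact_mod_cast (by omega : 0 < A.card)
  have hκA : (2 : ℝ) ≤ kappaIn G A := by exact_mod_cast two_le_kappaIn hA2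
  have hlarge : 4 ≤ δ * A.card := by
    by_contra! hlt
    have h1 : (A.card : ℝ) ≤ 2 ^ M := by
      rw [one_div, inv_pow, inv_lt_iff_one_lt_mul₀ (by positivity)] at hM
      refine le_of_mul_le_mul_left ?_ hδ
      linarith
    have h2 : (A.card : ℝ) ^ τ ≤ 2 := by
      calc (A.card : ℝ) ^ τ ≤ (2 ^ M : ℝ) ^ τ := Real.rpow_le_rpow hA0.le h1 hτ0.le
        _ = (2 : ℝ) ^ (M * τ) := by rw [← Real.rpow_natCast, ← Real.rpow_mul (by norm_num)]
        _ ≤ (2 : ℝ) ^ (1 : ℝ) := by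
          apply Real.rpow_le_rpow_of_exponent_le (by norm_num)
          push_cast at hτσ
          have : σ ≤ 1 := by norm_num [hσ]
          linarith
        _ = 2 := Real.rpow_one 2
    linarith
  have hdecay : ∀ B ⊆ A, (kappaIn G A : ℝ) * ((B.card : ℝ) / A.card) ^ τ ≤ kappaIn G B := by
    intro B hB
    rcases hB.eq_or_ssubset with rfl | hss
    · rw [div_self hA0.ne', Real.one_rpow, mul_one]
    · refine le_trans ?_ (ih B hss)
      have hpA : (0 : ℝ) < (A.card : ℝ) ^ τ := Real.rpow_pos_of_pos hA0 _
      have hpB : (0 : ℝ) ≤ (B.card : ℝ) ^ τ := Real.rpow_nonneg (Nat.cast_nonneg _) _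
      rw [Real.div_rpow (by positivity) (by positivity), mul_div_assoc', div_le_iff₀ hpA, mul_comm]
      exact mul_le_mul_of_nonneg_left hA.le hpB
  obtain ⟨X, hXA, hXc, hX⟩ := hR V G hG A (by linarith)
  have hX0 : (0 : ℝ) < X.card := by linarith
  obtain ⟨Y, hYX, hYne, hslow, hYκ⟩ := exists_slow_decay_subset G
    (Finset.card_pos.1 (by exact_mod_cast hX0)) hσ0
  have hY0 : (0 : ℝ) < Y.card := by exact_mod_cast Finset.card_pos.2 hYne
  set y : ℝ := (Y.card : ℝ) / X.card with hy
  have hy0 : 0 < y := div_pos hY0 hX0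
  have hpow : (y * δ) ^ τ ≤ (y ^ (M + 1)) ^ τ := by
    have h1 : y * δ ≤ (Y.card : ℝ) / A.card := by
      rw [hy, div_mul_eq_mul_div, div_le_div_iff₀ hX0 hA0]
      nlinarith
    have h2 := hdecay Y (hYX.trans hXA)
    have h3 : (y * δ) ^ τ ≤ ((Y.card : ℝ) / A.card) ^ τ :=
      Real.rpow_le_rpow (by positivity) h1 hτ0.le
    have h4 : (kappaIn G X : ℝ) ≤ kappaIn G A := by exact_mod_cast kappaIn_mono hXA
    have h5 : (y ^ (M + 1)) ^ τ = y ^ σ := by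
      rw [← Real.rpow_natCast, ← Real.rpow_mul hy0.le, hτσ]
    have h6 : 0 < y ^ σ := Real.rpow_pos_of_pos hy0 _
    rw [h5]
    refine le_of_mul_le_mul_left ?_ (by linarith : (0 : ℝ) < kappaIn G A)
    calc _ ≤ (kappaIn G A : ℝ) * ((Y.card : ℝ) / A.card) ^ τ := by gcongr
      _ ≤ kappaIn G Y := h2
      _ ≤ _ := hYκ
      _ ≤ _ := by gcongr
  have hδy : δ ≤ y ^ M := by
    have := (Real.rpow_le_rpow_iff (by positivity) (by positivity) hτ0).1 hpow
    rw [pow_succ, mul_comm] at this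
    exact le_of_mul_le_mul_right this hy0
  have hhalf : (1 / 2 : ℝ) < y := lt_of_pow_lt_pow_left₀ M hy0.le (by linarith)
  have hYX2 : (X.card : ℝ) ≤ 2 * Y.card := by
    rw [hy, lt_div_iff₀ hX0] at hhalf
    linarith
  have hY2 : 2 ≤ Y.card := by
    have : (2 : ℝ) ≤ Y.card := by linarith
    exact_mod_cast this
  have hdeg : ∀ G' : SimpleGraph V,
      (∀ x ∈ X, ((nbrsIn G' X x).card : ℝ) ≤ 1 / 10 ^ 24 / 2 * X.card) →
      ∀ x ∈ Y, ((nbrsIn G' Y x).card : ℝ) ≤ 1 / 10 ^ 24 * Y.card := by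
    intro G' h x hx
    have h1 : ((nbrsIn G' Y x).card : ℝ) ≤ (nbrsIn G' X x).card := by
      exact_mod_cast Finset.card_le_card (nbrsIn_mono hYX x)
    have h2 := h x (hYX hx)
    linarith
  rcases hX with hX | hX
  · exact false_of_sparse_of_slow_decay hG hY2 (hdeg G hX) hslow
  · refine false_of_sparse_of_slow_decay (G := Gᶜ) (fun ⟨e⟩ => hG' ⟨?_⟩) hY2 (hdeg Gᶜ hX)
      (by simpa only [kappaIn_compl] using hslow)
    have e' := Embedding.complEquiv e
    rwa [compl_compl] at e'

lemma cliqueNumIn_univ_le {V : Type*} [Fintype V] (G : SimpleGraph V) :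
    cliqueNumIn G Finset.univ ≤ G.cliqueNum := by
  obtain ⟨S, -, hS, he⟩ := exists_clique_card_eq G Finset.univ
  exact he ▸ hS.card_le_cliqueNum

end Main

/-- For `H` the star-expansion of `P₄`, the set `{H, H̄}` has the Erdős–Hajnal property. -/
theorem stmt_13 :
    ∃ τ : ℝ, 0 < τ ∧
      ∀ (V : Type) [Fintype V] (G : SimpleGraph V),
        ¬ Nonempty (starExpansion (pathGraph 4) ↪g G) →
        ¬ Nonempty ((starExpansion (pathGraph 4))ᶜ ↪g G) →
        (Fintype.card V : ℝ) ^ τ ≤ ((max (alphaNum G) (omegaNum G) : ℕ) : ℝ) := by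
  obtain ⟨τ, hτ, h⟩ := exists_card_rpow_le_kappaIn
  refine ⟨τ / 2, by positivity, fun V _ G hG hG' => ?_⟩
  have h1 := h V G hG hG' Finset.univ
  rw [Finset.card_univ] at h1
  set m := max (alphaNum G) (omegaNum G) with hm
  have h2 : kappaIn G Finset.univ ≤ m * m :=
    Nat.mul_le_mul ((cliqueNumIn_univ_le G).trans (le_max_right _ _))
      ((cliqueNumIn_univ_le Gᶜ).trans (le_max_left _ _))
  have h3 : (kappaIn G Finset.univ : ℝ) ≤ (m : ℝ) * m := by exact_mod_cast h2
  refine le_of_sq_le_sq ?_ (Nat.cast_nonneg m)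
  rw [← Real.rpow_natCast, ← Real.rpow_mul (Nat.cast_nonneg _), sq]
  refine le_trans (le_of_eq ?_) (h1.trans h3)
  congr 1
  push_cast
  ring
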